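/- Strong converse for the K-hop problem: for every K ≥ 2, rates R₁,…,R_K ≥ 0, and type-I thresholds ε₁,…,ε_K ∈ [0,1), every (ε₁,…,ε_K)-achievable exponent tuple (θ₁,…,θ_K) satisfies θ_k ≤ ∑_{ℓ=1}^{k} η_ℓ(R_ℓ) for every k ∈ {1,…,K}. -/

import Mathlib

open Filter

noncomputable section

/-- `p` is a probability mass function on the finite alphabet `α`. -/
def IsPMF {α : Type*} [Fintype α] (p : α → ℝ) : Prop :=
  (∀ a, 0 ≤ p a) ∧ ∑ a, p a = 1

open Classical in
/-- Probability that the random variable `X` takes the value `a`, under the pmf `p`. -/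
def probEq {Ω α : Type*} [Fintype Ω] (p : Ω → ℝ) (X : Ω → α) (a : α) : ℝ :=
  ∑ ω, if X ω = a then p ω else 0

/-- Shannon entropy (base 2) of the random variable `X` under the pmf `p`. -/
def entOf {Ω α : Type*} [Fintype Ω] (p : Ω → ℝ) (X : Ω → α) : ℝ :=
  -∑ ω, p ω * Real.logb 2 (probEq p X (X ω))

/-- Mutual information `I(X ; Y)` under the pmf `p`. -/
def miOf {Ω α β : Type*} [Fintype Ω] (p : Ω → ℝ) (X : Ω → α) (Y : Ω → β) : ℝ :=
  entOf p X + entOf p Y - entOf p (fun ω => (X ω, Y ω))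

section KHop

variable (K : ℕ) (Y : ℕ → Type) [∀ i, Fintype (Y i)] [∀ i, Nonempty (Y i)]

/-- The index `j` viewed as an element of `Fin (K+1)` (the index of `Y_{ℓ-1}` for the
`ℓ = j+1`-th hop). -/
def idxLo (j : Fin K) : Fin (K + 1) := ⟨(j : ℕ), Nat.lt_succ_of_lt j.isLt⟩

/-- The index `j+1` viewed as an element of `Fin (K+1)`. -/
def idxHi (j : Fin K) : Fin (K + 1) := ⟨(j : ℕ) + 1, Nat.succ_lt_succ j.isLt⟩

variable (P : (∀ i : Fin (K + 1), Y i) → ℝ)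

/-- The i.i.d. law of the source tuple `(Y₀ⁿ,…,Y_Kⁿ)` under hypothesis `H = 0`. -/
def iidK (n : ℕ) (ys : ∀ i : Fin (K + 1), Fin n → Y i) : ℝ :=
  ∏ t : Fin n, P (fun i => ys i t)

open Classical in
/-- The marginal pmf of `Y_i` under `P`. -/
def margK (i : Fin (K + 1)) (c : Y i) : ℝ :=
  ∑ y : ∀ i : Fin (K + 1), Y i, if y i = c then P y else 0

/-- The product of the marginals `P_{Y₀}·P_{Y₁}⋯P_{Y_K}`. -/
def prodMargK (y : ∀ i : Fin (K + 1), Y i) : ℝ := ∏ i, margK K Y P i (y i)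

/-- The i.i.d. law of the source tuple under hypothesis `H = 1` (product of marginals). -/
def iidQK (n : ℕ) (ys : ∀ i : Fin (K + 1), Fin n → Y i) : ℝ :=
  ∏ t : Fin n, prodMargK K Y P (fun i => ys i t)

open Classical in
/-- The pairwise marginal `P_{Y_j Y_{j+1}}` of `P`. -/
def pairMargK (j : Fin K) (a : Y (j : ℕ)) (b : Y ((j : ℕ) + 1)) : ℝ :=
  ∑ y : ∀ i : Fin (K + 1), Y i, if y (idxLo K j) = a ∧ y (idxHi K j) = b then P y else 0

open Classical in
/-- `P` forms the Markov chain `Y₀ → Y₁ → ⋯ → Y_K`. -/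
def IsMarkovChainK : Prop :=
  ∀ y : ∀ i : Fin (K + 1), Y i,
    P y * ∏ i ∈ Finset.univ.filter (fun i : Fin (K + 1) => 0 < (i : ℕ) ∧ (i : ℕ) < K),
        margK K Y P i (y i)
      = ∏ j : Fin K, pairMargK K Y P j (y (idxLo K j)) (y (idxHi K j))

/-- The set of mutual-information values `I(U;Y_{j+1})` attainable by conditional pmfs
`P_{U|Y_j}` (on a finite auxiliary alphabet) with `I(U;Y_j) ≤ R`, computed under
`P_{U|Y_j}·P_{Y_j Y_{j+1}}`. -/
def etaSetK (j : Fin K) (R : ℝ) : Set ℝ :=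
  {r | ∃ (m : ℕ) (PU : Y (j : ℕ) → Fin m → ℝ),
      (∀ a, IsPMF (PU a)) ∧
      miOf (fun q : Fin m × Y (j : ℕ) × Y ((j : ℕ) + 1) =>
          PU q.2.1 q.1 * pairMargK K Y P j q.2.1 q.2.2)
        (fun q => q.1) (fun q => q.2.1) ≤ R ∧
      r = miOf (fun q : Fin m × Y (j : ℕ) × Y ((j : ℕ) + 1) =>
          PU q.2.1 q.1 * pairMargK K Y P j q.2.1 q.2.2)
        (fun q => q.1) (fun q => q.2.2)}

/-- The function `η_{j+1}(R) = max I(U;Y_{j+1})` over `P_{U|Y_j}` with `I(U;Y_j) ≤ R`. -/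
def etaK (j : Fin K) (R : ℝ) : ℝ := sSup (etaSetK K Y P j R)

/-- Extension of a source tuple to all natural indices (junk beyond `K`). -/
def extendTup (n : ℕ) (ys : ∀ i : Fin (K + 1), Fin n → Y i) (ℓ : ℕ) : Fin n → Y ℓ :=
  if h : ℓ < K + 1 then ys ⟨ℓ, h⟩ else fun _ => Classical.arbitrary (Y ℓ)

/-- The messages computed recursively from the encoders:
`msgRec φ ys' ℓ` is the message `M_{ℓ+1}`, i.e. `M₁ = φ₀(Y₀ⁿ)` and
`M_{ℓ+2} = φ_{ℓ+1}(Y_{ℓ+1}ⁿ, M_{ℓ+1})`. -/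
def msgRec (n : ℕ) (φ : ∀ ℓ : ℕ, (Fin n → Y ℓ) → ℕ → ℕ)
    (ys' : ∀ ℓ : ℕ, Fin n → Y ℓ) : ℕ → ℕ
  | 0 => φ 0 (ys' 0) 0
  | (ℓ + 1) => φ (ℓ + 1) (ys' (ℓ + 1)) (msgRec n φ ys' ℓ)

open Classical in
/-- The type-I error probability `α_{j+1,n} = Pr[Ĥ_{j+1} = 1 | H = 0]` (decisions output
`true` for the guess `Ĥ = 1`). -/
def alphaK (n : ℕ) (φ : ∀ ℓ : ℕ, (Fin n → Y ℓ) → ℕ → ℕ)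
    (g : ∀ m : ℕ, (Fin n → Y m) → ℕ → Bool) (j : Fin K) : ℝ :=
  ∑ ys : ∀ i : Fin (K + 1), Fin n → Y i,
    if g ((j : ℕ) + 1) (extendTup K Y n ys ((j : ℕ) + 1))
        (msgRec Y n φ (extendTup K Y n ys) (j : ℕ)) = true
    then iidK K Y P n ys else 0

open Classical in
/-- The type-II error probability `β_{j+1,n} = Pr[Ĥ_{j+1} = 0 | H = 1]`. -/
def betaK (n : ℕ) (φ : ∀ ℓ : ℕ, (Fin n → Y ℓ) → ℕ → ℕ)
    (g : ∀ m : ℕ, (Fin n → Y m) → ℕ → Bool) (j : Fin K) : ℝ :=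
  ∑ ys : ∀ i : Fin (K + 1), Fin n → Y i,
    if g ((j : ℕ) + 1) (extendTup K Y n ys ((j : ℕ) + 1))
        (msgRec Y n φ (extendTup K Y n ys) (j : ℕ)) = false
    then iidQK K Y P n ys else 0

/-- The exponent tuple `θ` is `(ε₁,…,ε_K)`-achievable with rates `(R₁,…,R_K)`:
there exists a sequence of encoders and decision functions whose messages satisfy
`len(M_k) ≤ nR_k` (i.e. `M_k` takes fewer than `2^{nR_k}+1` values), whose type-I error
probabilities satisfy `limsup α_{k,n} ≤ ε_k`, and whose type-II error probabilities
satisfy `liminf (1/n)·log(1/β_{k,n}) ≥ θ_k` for every `k`. -/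
def achievableK (Rr εr θ : Fin K → ℝ) : Prop :=
  ∃ (φ : ∀ n : ℕ, ∀ ℓ : ℕ, (Fin n → Y ℓ) → ℕ → ℕ)
    (g : ∀ n : ℕ, ∀ m : ℕ, (Fin n → Y m) → ℕ → Bool),
    (∀ n : ℕ, ∀ j : Fin K, ∀ ys : ∀ i : Fin (K + 1), Fin n → Y i,
        ((msgRec Y n (φ n) (extendTup K Y n ys) (j : ℕ) : ℕ) : ℝ) + 1
          ≤ 2 ^ ((n : ℝ) * Rr j)) ∧
    (∀ j : Fin K, limsup (fun n => alphaK K Y P n (φ n) (g n) j) atTop ≤ εr j) ∧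
    (∀ j : Fin K,
      θ j ≤ liminf (fun n => Real.logb 2 (1 / betaK K Y P n (φ n) (g n) j) / n) atTop)

/-- The fundamental exponents region `E*(R₁,…,R_K,ε₁,…,ε_K)`: the closure of the set of
all `(ε₁,…,ε_K)`-achievable exponent tuples. -/
def Eregion (Rr εr : Fin K → ℝ) : Set (Fin K → ℝ) :=
  closure {θ | achievableK K Y P Rr εr θ}

end KHop

/-!
Condition the law of hypothesis `H = 0` on the event that the receiver of hop `k` decides `0`.
This event has probability bounded away from `0`, so the conditioned law `p` is dominated by a
constant multiple of the original one, while `log (1 / β)` becomes the relative entropy between the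
laws of the decision under `p` and under `H = 1`. Under `H = 1` every message is independent of the
sequence observed by its receiver. Hence, by data processing and the chain rule, that relative
entropy is at most a constant plus a sum over the hops of the information, under `p`, between the
message and the received sequence.

Each of these terms single-letterises with the auxiliary variable `U_t = (M, past of t)` and a
uniform time `t`. Under `p` the letters are no longer i.i.d. and `U - Y_{ℓ-1} - Y_ℓ` is no longer a
Markov chain, but the divergence from this situation is `O(1/n)` per letter, and the bottleneck
function `η_ℓ` is stable under such perturbations.
-/

/-! ### Laws of random variables on a finite space -/

section Laws

/-- Absolute continuity of the weight `p` with respect to the weight `q`. -/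
def AbsCont {Ω : Type*} (p q : Ω → ℝ) : Prop := ∀ ⦃ω⦄, p ω ≠ 0 → q ω ≠ 0

theorem AbsCont.of_le_mul {Ω : Type*} {p q : Ω → ℝ} {c : ℝ} (hp : ∀ ω, 0 ≤ p ω)
    (h : ∀ ω, p ω ≤ c * q ω) : AbsCont p q :=
  fun ω hω hq => hω (le_antisymm (by simpa [hq] using h ω) (hp ω))

variable {Ω α β : Type*} [Fintype Ω] {p q : Ω → ℝ}

theorem probEq_nonneg (hp : ∀ ω, 0 ≤ p ω) (X : Ω → α) (a : α) : 0 ≤ probEq p X a :=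
  Finset.sum_nonneg fun ω _ => by split_ifs <;> simp [hp]

theorem le_probEq (hp : ∀ ω, 0 ≤ p ω) (X : Ω → α) (ω : Ω) : p ω ≤ probEq p X (X ω) := by
  classical
  have := Finset.single_le_sum (f := fun ω' => if X ω' = X ω then p ω' else 0)
    (fun ω' _ => by split_ifs <;> simp [hp]) (Finset.mem_univ ω)
  simpa [probEq] using this

theorem probEq_ne_zero (hp : ∀ ω, 0 ≤ p ω) (X : Ω → α) {ω : Ω} (hω : p ω ≠ 0) :
    probEq p X (X ω) ≠ 0 :=
  (((hp ω).lt_of_ne' hω).trans_le (le_probEq hp X ω)).ne'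

theorem exists_of_probEq_ne_zero {X : Ω → α} {a : α} (h : probEq p X a ≠ 0) :
    ∃ ω, p ω ≠ 0 ∧ X ω = a := by
  classical
  obtain ⟨ω, -, hω⟩ := Finset.exists_ne_zero_of_sum_ne_zero h
  obtain ⟨hX, hp⟩ := ite_ne_right_iff.mp hω
  exact ⟨ω, hp, hX⟩

theorem probEq_congr (p : Ω → ℝ) {X : Ω → α} {Z : Ω → β} {a : α} {b : β}
    (h : ∀ ω, X ω = a ↔ Z ω = b) : probEq p X a = probEq p Z b := by
  classical
  exact Finset.sum_congr rfl fun ω _ => if_congr (h ω) rfl rfl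

theorem probEq_le_of_imp (hp : ∀ ω, 0 ≤ p ω) {X : Ω → α} {Z : Ω → β} {a : α} {b : β}
    (h : ∀ ω, X ω = a → Z ω = b) : probEq p X a ≤ probEq p Z b := by
  refine Finset.sum_le_sum fun ω _ => ?_
  by_cases hX : X ω = a
  · simp [hX, h ω hX]
  · rw [if_neg hX]
    split_ifs <;> simp [hp]

theorem probEq_le_mul {c : ℝ} (h : ∀ ω, p ω ≤ c * q ω) (X : Ω → α) (a : α) :
    probEq p X a ≤ c * probEq q X a := by
  unfold probEq
  rw [Finset.mul_sum]
  exact Finset.sum_le_sum fun ω _ => by split_ifs <;> simp [h]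

theorem probEq_id (p : Ω → ℝ) : probEq p id = p := by
  classical
  funext ω
  simp [probEq]

theorem probEq_equiv (p : Ω → ℝ) (e : Ω ≃ α) (a : α) : probEq p e a = p (e.symm a) := by
  classical
  simp [probEq, ← Equiv.eq_symm_apply]

theorem sum_probEq_mul [Fintype α] (p : Ω → ℝ) (X : Ω → α) (f : α → ℝ) :
    ∑ a, probEq p X a * f a = ∑ ω, p ω * f (X ω) := by
  classical
  unfold probEq
  simp_rw [Finset.sum_mul]
  rw [Finset.sum_comm]
  simp [ite_mul]

theorem sum_probEq [Fintype α] (p : Ω → ℝ) (X : Ω → α) : ∑ a, probEq p X a = ∑ ω, p ω := by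
  simpa using sum_probEq_mul p X fun _ => 1

theorem isPMF_probEq [Fintype α] (hp : IsPMF p) (X : Ω → α) : IsPMF (probEq p X) :=
  ⟨probEq_nonneg hp.1 X, (sum_probEq p X).trans hp.2⟩

theorem probEq_le_one (hp : IsPMF p) (X : Ω → α) (a : α) : probEq p X a ≤ 1 := by
  rw [← hp.2]
  exact Finset.sum_le_sum fun ω _ => by split_ifs <;> simp [hp.1 ω]

theorem probEq_probEq [Fintype α] (p : Ω → ℝ) (X : Ω → α) (f : α → β) :
    probEq (probEq p X) f = probEq p fun ω => f (X ω) := by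
  classical
  funext b
  simpa [probEq] using sum_probEq_mul p X fun a => if f a = b then 1 else 0

theorem sum_probEq_prod [Fintype β] (p : Ω → ℝ) (X : Ω → α) (Z : Ω → β) (a : α) :
    ∑ b, probEq p (fun ω => (X ω, Z ω)) (a, b) = probEq p X a := by
  classical
  unfold probEq
  rw [Finset.sum_comm]
  refine Finset.sum_congr rfl fun ω _ => ?_
  by_cases h : X ω = a <;> simp [h]

theorem probEq_fst [Fintype α] [Fintype β] (p : α × β → ℝ) (a : α) :
    probEq p Prod.fst a = ∑ b, p (a, b) := by
  have h := sum_probEq_prod p Prod.fst Prod.snd a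
  rw [← h]
  exact Finset.sum_congr rfl fun b _ => congrFun (probEq_id p) (a, b)

theorem probEq_snd [Fintype α] [Fintype β] (p : α × β → ℝ) (b : β) :
    probEq p Prod.snd b = ∑ a, p (a, b) := by
  have h := sum_probEq_prod p Prod.snd Prod.fst b
  rw [← h]
  refine Finset.sum_congr rfl fun a _ => ?_
  rw [← congrFun (probEq_id p) (a, b)]
  exact probEq_congr p fun z => by simp [Prod.ext_iff, and_comm]

theorem AbsCont.law (h : AbsCont p q) (hq : ∀ ω, 0 ≤ q ω) (X : Ω → α) :
    AbsCont (probEq p X) (probEq q X) := by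
  intro a ha
  obtain ⟨ω, hω, rfl⟩ := exists_of_probEq_ne_zero ha
  exact probEq_ne_zero hq X (h hω)

end Laws

/-! ### Relative entropy -/

section RelEntropy

variable {Ω α β : Type*} [Fintype Ω] {p q : Ω → ℝ}

/-- The expectation of `log f` under the weight `p`. -/
def meanLog (p f : Ω → ℝ) : ℝ := ∑ ω, p ω * Real.log (f ω)

theorem meanLog_le_meanLog (hp : ∀ ω, 0 ≤ p ω) {f g : Ω → ℝ}
    (h : ∀ ω, p ω ≠ 0 → 0 < f ω ∧ f ω ≤ g ω) : meanLog p f ≤ meanLog p g := by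
  refine Finset.sum_le_sum fun ω _ => ?_
  rcases eq_or_ne (p ω) 0 with h0 | h0
  · simp [h0]
  · exact mul_le_mul_of_nonneg_left (Real.log_le_log (h ω h0).1 (h ω h0).2) (hp ω)

theorem meanLog_congr {f g : Ω → ℝ} (h : ∀ ω, p ω ≠ 0 → f ω = g ω) :
    meanLog p f = meanLog p g := by
  refine Finset.sum_congr rfl fun ω _ => ?_
  rcases eq_or_ne (p ω) 0 with h0 | h0
  · simp [h0]
  · rw [h ω h0]

theorem meanLog_mul {f g : Ω → ℝ} (hf : AbsCont p f) (hg : AbsCont p g) :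
    meanLog p (fun ω => f ω * g ω) = meanLog p f + meanLog p g := by
  unfold meanLog
  rw [← Finset.sum_add_distrib]
  refine Finset.sum_congr rfl fun ω _ => ?_
  rcases eq_or_ne (p ω) 0 with h0 | h0
  · simp [h0]
  · rw [Real.log_mul (hf h0) (hg h0), mul_add]

theorem meanLog_div {f g : Ω → ℝ} (hf : AbsCont p f) (hg : AbsCont p g) :
    meanLog p (fun ω => f ω / g ω) = meanLog p f - meanLog p g := by
  have h := meanLog_mul hf fun ω h0 => inv_ne_zero (hg h0)
  simp only [div_eq_mul_inv, h]
  simp [meanLog, sub_eq_add_neg]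

theorem meanLog_prod {ι : Type*} (s : Finset ι) {f : ι → Ω → ℝ} (hf : ∀ i ∈ s, AbsCont p (f i)) :
    meanLog p (fun ω => ∏ i ∈ s, f i ω) = ∑ i ∈ s, meanLog p (f i) := by
  unfold meanLog
  rw [Finset.sum_comm]
  refine Finset.sum_congr rfl fun ω _ => ?_
  rcases eq_or_ne (p ω) 0 with h0 | h0
  · simp [h0]
  · rw [Real.log_prod fun i hi => hf i hi h0, Finset.mul_sum]

theorem meanLog_const (p : Ω → ℝ) (c : ℝ) : meanLog p (fun _ => c) = (∑ ω, p ω) * Real.log c :=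
  (Finset.sum_mul _ _ _).symm

theorem meanLog_probEq [Fintype α] (p : Ω → ℝ) (X : Ω → α) (f : α → ℝ) :
    meanLog (probEq p X) f = meanLog p (fun ω => f (X ω)) :=
  sum_probEq_mul p X fun a => Real.log (f a)

theorem absCont_probEq_self (hp : ∀ ω, 0 ≤ p ω) (X : Ω → α) :
    AbsCont p (fun ω => probEq p X (X ω)) :=
  fun _ => probEq_ne_zero hp X

/-- The relative entropy `D(p ‖ q)` of finite weights, in nats. -/
def relEntropy (p q : Ω → ℝ) : ℝ := meanLog p (fun ω => p ω / q ω)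

theorem relEntropy_eq_sub (h : AbsCont p q) : relEntropy p q = meanLog p p - meanLog p q :=
  meanLog_div (fun _ => id) h

theorem relEntropy_probEq [Fintype α] (p : Ω → ℝ) (X : Ω → α) (r : α → ℝ) :
    relEntropy (probEq p X) r = meanLog p (fun ω => probEq p X (X ω) / r (X ω)) :=
  meanLog_probEq p X _

theorem relEntropy_le_sum_mul_of_le_exp_mul (hp : ∀ ω, 0 ≤ p ω) {B : ℝ}
    (h : ∀ ω, p ω ≤ Real.exp B * q ω) : relEntropy p q ≤ (∑ ω, p ω) * B := by
  conv_rhs => rw [← Real.log_exp B, ← meanLog_const p (Real.exp B)]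
  refine meanLog_le_meanLog hp fun ω h0 => ?_
  have hpos : 0 < p ω := (hp ω).lt_of_ne' h0
  have hq : 0 < q ω := pos_of_mul_pos_right (hpos.trans_le (h ω)) (Real.exp_pos B).le
  exact ⟨div_pos hpos hq, (div_le_iff₀ hq).mpr (h ω)⟩

theorem relEntropy_le_of_le_exp_mul (hp : IsPMF p) {B : ℝ} (h : ∀ ω, p ω ≤ Real.exp B * q ω) :
    relEntropy p q ≤ B := by
  simpa [hp.2] using relEntropy_le_sum_mul_of_le_exp_mul hp.1 h

theorem sum_sub_sum_le_relEntropy (hp : ∀ ω, 0 ≤ p ω) (hq : ∀ ω, 0 ≤ q ω) (hpq : AbsCont p q) :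
    ∑ ω, p ω - ∑ ω, q ω ≤ relEntropy p q := by
  rw [← Finset.sum_sub_distrib]
  refine Finset.sum_le_sum fun ω _ => ?_
  rcases eq_or_ne (p ω) 0 with h0 | h0
  · simp [h0, hq]
  · have hpos : 0 < p ω := (hp ω).lt_of_ne' h0
    have hlog := Real.one_sub_inv_le_log_of_pos (div_pos hpos ((hq ω).lt_of_ne' (hpq h0)))
    calc p ω - q ω = p ω * (1 - (p ω / q ω)⁻¹) := by field_simp
      _ ≤ p ω * Real.log (p ω / q ω) := mul_le_mul_of_nonneg_left hlog hpos.le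

theorem relEntropy_nonneg (hp : ∀ ω, 0 ≤ p ω) (hq : ∀ ω, 0 ≤ q ω) (hpq : AbsCont p q)
    (h : ∑ ω, q ω ≤ ∑ ω, p ω) : 0 ≤ relEntropy p q :=
  (sub_nonneg.mpr h).trans (sum_sub_sum_le_relEntropy hp hq hpq)

/- Compare `p` with the weight `q · (p_X / q_X)`, which has the total mass of `p`. -/
theorem relEntropy_probEq_le [Fintype α] (hp : ∀ ω, 0 ≤ p ω) (hq : ∀ ω, 0 ≤ q ω)
    (hpq : AbsCont p q) (X : Ω → α) :
    relEntropy (probEq p X) (probEq q X) ≤ relEntropy p q := by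
  have hpX := absCont_probEq_self hp X
  have hqX : AbsCont p (fun ω => probEq q X (X ω)) := fun ω h => probEq_ne_zero hq X (hpq h)
  have hratio : AbsCont p (fun ω => probEq p X (X ω) / probEq q X (X ω)) :=
    fun ω h => div_ne_zero (hpX h) (hqX h)
  set r : Ω → ℝ := fun ω => q ω * (probEq p X (X ω) / probEq q X (X ω))
  have hr : ∀ ω, 0 ≤ r ω := fun ω =>
    mul_nonneg (hq ω) (div_nonneg (probEq_nonneg hp _ _) (probEq_nonneg hq _ _))
  have hpr : AbsCont p r := fun ω h => mul_ne_zero (hpq h) (hratio h)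
  have hmass : ∑ ω, r ω = ∑ ω, p ω := by
    rw [← sum_probEq_mul q X fun a => probEq p X a / probEq q X a, ← sum_probEq p X]
    exact Finset.sum_congr rfl fun a _ =>
      mul_div_cancel_of_imp' fun h => by_contra fun h' => hpq.law hq X h' h
  have hnonneg := relEntropy_nonneg hp hr hpr hmass.le
  rw [relEntropy_eq_sub hpr, meanLog_mul hpq hratio, ← relEntropy_probEq] at hnonneg
  rw [relEntropy_eq_sub hpq]
  linarith

theorem relEntropy_probEq_le_of_factorsThrough [Fintype α] [Fintype β] (hp : ∀ ω, 0 ≤ p ω)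
    (hq : ∀ ω, 0 ≤ q ω) (hpq : AbsCont p q) {X : Ω → α} {Z : Ω → β}
    (h : Function.FactorsThrough X Z) :
    relEntropy (probEq p X) (probEq q X) ≤ relEntropy (probEq p Z) (probEq q Z) := by
  rcases isEmpty_or_nonempty Ω with hΩ | ⟨⟨ω₀⟩⟩
  · simp [relEntropy_probEq, meanLog]
  have : Nonempty α := ⟨X ω₀⟩
  obtain ⟨f, rfl⟩ := (Function.factorsThrough_iff X).mp h
  have hlaw : ∀ r : Ω → ℝ, probEq r (f ∘ Z) = probEq (probEq r Z) f :=
    fun r => (probEq_probEq r Z f).symm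
  rw [hlaw p, hlaw q]
  exact relEntropy_probEq_le (probEq_nonneg hp Z) (probEq_nonneg hq Z) (hpq.law hq Z) f

end RelEntropy

/-! ### Information relative to a reference law, and channels -/

section Channel

variable {V X Y : Type*} {s r : V × X → ℝ} {Q : X → ℝ} {W : X → Y → ℝ}

/-- The joint weight of `(V, X, Y)` when `(V, X)` has weight `s` and `Y` is the output of the
channel `W` with input `X`. -/
def channelJoint (s : V × X → ℝ) (W : X → Y → ℝ) : V × X × Y → ℝ :=
  fun z => s (z.1, z.2.1) * W z.2.1 z.2.2

theorem channelJoint_nonneg (hs : ∀ z, 0 ≤ s z) (hW : ∀ x y, 0 ≤ W x y) (z : V × X × Y) :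
    0 ≤ channelJoint s W z :=
  mul_nonneg (hs _) (hW _ _)

theorem AbsCont.channelJoint (h : AbsCont s r) : AbsCont (channelJoint s W) (channelJoint r W) :=
  fun _ hz => mul_ne_zero (h (left_ne_zero_of_mul hz)) (right_ne_zero_of_mul hz)

/-- The weight `ν • s` on `V × X` together with the weight `ρ` on an additional value of `V`. The
additional value leaves room for correcting the law of the second component or the information
between the components. -/
def adjoin (ν : ℝ) (s : V × X → ℝ) (ρ : X → ℝ) : Option V × X → ℝ
  | (some v, x) => ν * s (v, x)
  | (none, x) => ρ x

variable [Fintype X]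

/-- The weight of `(V, Y)` when `(V, X)` has weight `s` and `Y` is the output of the channel `W`
with input `X`. -/
def channelPush (s : V × X → ℝ) (W : X → Y → ℝ) : V × Y → ℝ := fun z => ∑ x, s (z.1, x) * W x z.2

/-- The output law of the channel `W` with input law `Q`. -/
def outputLaw (Q : X → ℝ) (W : X → Y → ℝ) (y : Y) : ℝ := ∑ x, Q x * W x y

theorem outputLaw_const_mul (c : ℝ) (Q : X → ℝ) (W : X → Y → ℝ) :
    outputLaw (fun x => c * Q x) W = fun y => c * outputLaw Q W y := by
  funext y
  simp only [outputLaw, mul_assoc, ← Finset.mul_sum]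

theorem channelPush_adjoin (ν : ℝ) (s : V × X → ℝ) (ρ : X → ℝ) (W : X → Y → ℝ) :
    channelPush (adjoin ν s ρ) W = adjoin ν (channelPush s W) (outputLaw ρ W) := by
  funext ⟨v, y⟩
  cases v <;> simp [channelPush, adjoin, outputLaw, Finset.mul_sum, mul_assoc]

variable [Fintype V]

/-- The product of the first marginal of `s` with the reference law `Q`. -/
def decoupled (s : V × X → ℝ) (Q : X → ℝ) : V × X → ℝ := fun z => probEq s Prod.fst z.1 * Q z.2

/-- The information `D(s ‖ s_V ⊗ Q)` between the two components of `s`, measured against the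
reference law `Q` of the second one. It is the mutual information (in nats) if `Q` is the second
marginal of `s`. -/
def refInfo (s : V × X → ℝ) (Q : X → ℝ) : ℝ := relEntropy s (decoupled s Q)

theorem decoupled_nonneg (hs : ∀ z, 0 ≤ s z) (hQ : ∀ x, 0 ≤ Q x) (z : V × X) :
    0 ≤ decoupled s Q z :=
  mul_nonneg (probEq_nonneg hs _ _) (hQ _)

theorem sum_decoupled (s : V × X → ℝ) (hQ : ∑ x, Q x = 1) : ∑ z, decoupled s Q z = ∑ z, s z := by
  simp only [decoupled, Fintype.sum_prod_type, ← Finset.mul_sum, hQ, mul_one, probEq_fst]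

theorem absCont_decoupled (hs : ∀ z, 0 ≤ s z) (hQ : ∀ v x, s (v, x) ≠ 0 → Q x ≠ 0) :
    AbsCont s (decoupled s Q) :=
  fun _ hz => mul_ne_zero (probEq_ne_zero hs Prod.fst hz) (hQ _ _ hz)

theorem refInfo_nonneg (hs : ∀ z, 0 ≤ s z) (hQ : IsPMF Q) (hsQ : ∀ v x, s (v, x) ≠ 0 → Q x ≠ 0) :
    0 ≤ refInfo s Q :=
  relEntropy_nonneg hs (decoupled_nonneg hs hQ.1) (absCont_decoupled hs hsQ)
    (sum_decoupled s hQ.2).le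

theorem refInfo_probEq {Ω : Type*} [Fintype Ω] (p : Ω → ℝ) (U : Ω → V) (A : Ω → X) (Q : X → ℝ) :
    refInfo (probEq p fun ω => (U ω, A ω)) Q =
      meanLog p (fun ω => probEq p (fun ω => (U ω, A ω)) (U ω, A ω) /
        (probEq p U (U ω) * Q (A ω))) := by
  rw [refInfo, relEntropy_probEq]
  simp only [decoupled, probEq_probEq]

theorem relEntropy_snd_le_refInfo (hs : IsPMF s) (hQ : ∀ x, 0 ≤ Q x)
    (hsQ : ∀ v x, s (v, x) ≠ 0 → Q x ≠ 0) :
    relEntropy (probEq s Prod.snd) Q ≤ refInfo s Q := by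
  have hsnd : probEq (decoupled s Q) Prod.snd = Q := by
    funext x
    simp only [probEq_snd, decoupled, ← Finset.sum_mul, sum_probEq, hs.2, one_mul]
  have hle := relEntropy_probEq_le hs.1 (decoupled_nonneg hs.1 hQ) (absCont_decoupled hs.1 hsQ)
    Prod.snd
  rwa [hsnd] at hle

variable {V' X' : Type*} [Fintype V'] [Fintype X']

theorem probEq_decoupled_map (s : V × X → ℝ) (Q : X → ℝ) (g : V → V') (f : X → X') :
    probEq (decoupled s Q) (fun z => (g z.1, f z.2)) =
      decoupled (probEq s fun z => (g z.1, f z.2)) (probEq Q f) := by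
  classical
  funext ⟨v', x'⟩
  rw [decoupled, probEq_probEq, ← probEq_probEq s Prod.fst g]
  simp only [probEq, decoupled, Fintype.sum_prod_type, Prod.mk.injEq, ite_and, Finset.sum_mul_sum]
  refine Finset.sum_congr rfl fun v _ => ?_
  by_cases hv : g v = v' <;> simp [hv]

theorem refInfo_map_le {s : V × X → ℝ} {Q : X → ℝ} (hs : ∀ z, 0 ≤ s z) (hQ : ∀ x, 0 ≤ Q x)
    (hsQ : ∀ v x, s (v, x) ≠ 0 → Q x ≠ 0) (g : V → V') (f : X → X') :
    refInfo (probEq s fun z => (g z.1, f z.2)) (probEq Q f) ≤ refInfo s Q := by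
  rw [refInfo, ← probEq_decoupled_map]
  exact relEntropy_probEq_le hs (decoupled_nonneg hs hQ) (absCont_decoupled hs hsQ) _

theorem refInfo_map_fst_le {s : V × X → ℝ} {Q : X → ℝ} (hs : ∀ z, 0 ≤ s z) (hQ : ∀ x, 0 ≤ Q x)
    (hsQ : ∀ v x, s (v, x) ≠ 0 → Q x ≠ 0) (g : V → V') :
    refInfo (probEq s fun z => (g z.1, z.2)) Q ≤ refInfo s Q := by
  simpa only [probEq_id, id_eq] using refInfo_map_le hs hQ hsQ g id

variable [Fintype Y]

theorem probEq_channelJoint_input (s : V × X → ℝ) (hW : ∀ x, IsPMF (W x)) :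
    probEq (channelJoint s W) (fun z => (z.1, z.2.1)) = s := by
  classical
  funext ⟨v, x⟩
  simp [probEq, channelJoint, Fintype.sum_prod_type, ite_and, ← Finset.mul_sum, (hW _).2]

theorem probEq_channelJoint_output (s : V × X → ℝ) (W : X → Y → ℝ) :
    probEq (channelJoint s W) (fun z => (z.1, z.2.2)) = channelPush s W := by
  classical
  funext ⟨v, y⟩
  simp [probEq, channelJoint, channelPush, Fintype.sum_prod_type, ite_and]

theorem isPMF_channelJoint (hs : IsPMF s) (hW : ∀ x, IsPMF (W x)) :
    IsPMF (channelJoint s W) := by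
  refine ⟨channelJoint_nonneg hs.1 fun x => (hW x).1, ?_⟩
  rw [← sum_probEq _ fun z : V × X × Y => (z.1, z.2.1), probEq_channelJoint_input s hW, hs.2]

theorem isPMF_channelPush (hs : IsPMF s) (hW : ∀ x, IsPMF (W x)) : IsPMF (channelPush s W) := by
  rw [← probEq_channelJoint_output]
  exact isPMF_probEq (isPMF_channelJoint hs hW) _

theorem isPMF_outputLaw (hQ : IsPMF Q) (hW : ∀ x, IsPMF (W x)) : IsPMF (outputLaw Q W) := by
  refine ⟨fun y => Finset.sum_nonneg fun x _ => mul_nonneg (hQ.1 x) ((hW x).1 y), ?_⟩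
  simp_rw [outputLaw]
  rw [Finset.sum_comm]
  simp_rw [← Finset.mul_sum, (hW _).2, mul_one, hQ.2]

theorem outputLaw_ne_zero (hQ : IsPMF Q) (hW : ∀ x, IsPMF (W x)) {x : X} {y : Y} (hx : Q x ≠ 0)
    (hxy : W x y ≠ 0) : outputLaw Q W y ≠ 0 := by
  have hpos : 0 < Q x * W x y :=
    mul_pos ((hQ.1 x).lt_of_ne' hx) (((hW x).1 y).lt_of_ne' hxy)
  exact (hpos.trans_le (Finset.single_le_sum (f := fun x => Q x * W x y)
    (fun x _ => mul_nonneg (hQ.1 x) ((hW x).1 y)) (Finset.mem_univ x))).ne'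

theorem probEq_fst_channelPush (s : V × X → ℝ) (hW : ∀ x, IsPMF (W x)) :
    probEq (channelPush s W) Prod.fst = probEq s Prod.fst := by
  funext v
  simp_rw [probEq_fst, channelPush]
  rw [Finset.sum_comm]
  simp_rw [← Finset.mul_sum, (hW _).2, mul_one]

theorem channelPush_decoupled (s : V × X → ℝ) (Q : X → ℝ) (hW : ∀ x, IsPMF (W x)) :
    channelPush (decoupled s Q) W = decoupled (channelPush s W) (outputLaw Q W) := by
  funext z
  rw [decoupled, probEq_fst_channelPush s hW]
  simp only [channelPush, decoupled, outputLaw, Finset.mul_sum, mul_assoc]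

theorem relEntropy_channelJoint (s r : V × X → ℝ) (hW : ∀ x, IsPMF (W x)) :
    relEntropy (channelJoint s W) (channelJoint r W) = relEntropy s r := by
  have hratio : relEntropy (channelJoint s W) (channelJoint r W) =
      meanLog (channelJoint s W) (fun z => s (z.1, z.2.1) / r (z.1, z.2.1)) :=
    meanLog_congr fun z hz => mul_div_mul_right _ _ (right_ne_zero_of_mul hz)
  rw [hratio, ← meanLog_probEq (channelJoint s W) (fun z => (z.1, z.2.1)) fun z => s z / r z,
    probEq_channelJoint_input s hW, relEntropy]

theorem relEntropy_channelJoint_input_add {s : V × X × Y → ℝ} (hs : ∀ z, 0 ≤ s z)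
    (hsr : AbsCont s (channelJoint r W)) :
    relEntropy s (channelJoint (probEq s fun z => (z.1, z.2.1)) W) +
      relEntropy (probEq s fun z => (z.1, z.2.1)) r = relEntropy s (channelJoint r W) := by
  have hin : AbsCont s fun z => probEq s (fun z => (z.1, z.2.1)) (z.1, z.2.1) :=
    absCont_probEq_self hs _
  rw [relEntropy_probEq, relEntropy, ← meanLog_mul]
  · refine meanLog_congr fun z hz => ?_
    have h1 := hin hz
    have h2 := left_ne_zero_of_mul (hsr hz)
    have h3 := right_ne_zero_of_mul (hsr hz)
    simp only [channelJoint]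
    field_simp
  · exact fun z hz => div_ne_zero hz (mul_ne_zero (hin hz) (right_ne_zero_of_mul (hsr hz)))
  · exact fun z hz => div_ne_zero (hin hz) (left_ne_zero_of_mul (hsr hz))

theorem relEntropy_channelPush_le (hs : ∀ z, 0 ≤ s z) (hr : ∀ z, 0 ≤ r z) (hsr : AbsCont s r)
    (hW : ∀ x, IsPMF (W x)) : relEntropy (channelPush s W) (channelPush r W) ≤ relEntropy s r := by
  rw [← relEntropy_channelJoint s r hW, ← probEq_channelJoint_output, ← probEq_channelJoint_output]
  exact relEntropy_probEq_le (channelJoint_nonneg hs fun x => (hW x).1)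
    (channelJoint_nonneg hr fun x => (hW x).1) hsr.channelJoint _

theorem refInfo_channelPush_le (hs : ∀ z, 0 ≤ s z) (hQ : ∀ x, 0 ≤ Q x)
    (hsQ : ∀ v x, s (v, x) ≠ 0 → Q x ≠ 0) (hW : ∀ x, IsPMF (W x)) :
    refInfo (channelPush s W) (outputLaw Q W) ≤ refInfo s Q := by
  rw [refInfo, ← channelPush_decoupled s Q hW]
  exact relEntropy_channelPush_le hs (decoupled_nonneg hs hQ) (absCont_decoupled hs hsQ) hW

theorem isPMF_adjoin {ν : ℝ} (hν : 0 ≤ ν) (hs : IsPMF s) {ρ : X → ℝ} (hρ : ∀ x, 0 ≤ ρ x)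
    (hmass : ∑ x, ρ x = 1 - ν) : IsPMF (adjoin ν s ρ) := by
  refine ⟨fun z => ?_, ?_⟩
  · rcases z with ⟨_ | v, x⟩
    exacts [hρ x, mul_nonneg hν (hs.1 _)]
  · have hs1 := hs.2
    rw [Fintype.sum_prod_type] at hs1
    simp [Fintype.sum_prod_type, adjoin, ← Finset.mul_sum, hs1, hmass]

theorem probEq_snd_adjoin (ν : ℝ) (s : V × X → ℝ) (ρ : X → ℝ) (x : X) :
    probEq (adjoin ν s ρ) Prod.snd x = ρ x + ν * probEq s Prod.snd x := by
  simp [probEq_snd, Fintype.sum_option, adjoin, Finset.mul_sum]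

theorem refInfo_adjoin {ν : ℝ} (hν : ν ≠ 0) (s : V × X → ℝ) (ρ Q : X → ℝ) :
    refInfo (adjoin ν s ρ) Q =
      ν * refInfo s Q + relEntropy ρ (fun x => (∑ x', ρ x') * Q x) := by
  have hsome : ∀ v, probEq (adjoin ν s ρ) Prod.fst (some v) = ν * probEq s Prod.fst v := fun v => by
    simp [probEq_fst, adjoin, Finset.mul_sum]
  have hnone : probEq (adjoin ν s ρ) Prod.fst none = ∑ x, ρ x := by
    simp [probEq_fst, adjoin]
  simp only [refInfo, relEntropy, meanLog, decoupled, Fintype.sum_prod_type, Fintype.sum_option,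
    hsome, hnone, adjoin, mul_assoc, mul_div_mul_left _ _ hν, Finset.mul_sum]
  exact add_comm _ _

theorem refInfo_adjoin_const_mul {ν : ℝ} (hν : ν ≠ 0) (s : V × X → ℝ) (c : ℝ) (hQ : IsPMF Q) :
    refInfo (adjoin ν s fun x => c * Q x) Q = ν * refInfo s Q := by
  simp [refInfo_adjoin hν, ← Finset.mul_sum, hQ.2, relEntropy, meanLog]

end Channel

/-! ### The information bottleneck -/

section Bottleneck

variable {Ω V V' X Y : Type*} [Fintype Ω]

theorem entOf_mul_log_two (p : Ω → ℝ) (U : Ω → V) :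
    entOf p U * Real.log 2 = -meanLog p (fun ω => probEq p U (U ω)) := by
  have h2 : Real.log 2 ≠ 0 := (Real.log_pos one_lt_two).ne'
  simp only [entOf, meanLog, Real.logb, neg_mul, Finset.sum_mul, mul_assoc, div_mul_cancel₀ _ h2]

variable [Fintype V] [Fintype V'] [Fintype X] [Fintype Y]

theorem miOf_mul_log_two {p : Ω → ℝ} (hp : ∀ ω, 0 ≤ p ω) (U : Ω → V) (A : Ω → X) :
    miOf p U A * Real.log 2 = refInfo (probEq p fun ω => (U ω, A ω)) (probEq p A) := by
  have hU := absCont_probEq_self hp U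
  have hA := absCont_probEq_self hp A
  rw [refInfo_probEq, meanLog_div (absCont_probEq_self hp fun ω => (U ω, A ω))
    fun ω h => mul_ne_zero (hU h) (hA h), meanLog_mul hU hA, miOf, sub_mul, add_mul,
    entOf_mul_log_two, entOf_mul_log_two, entOf_mul_log_two]
  ring

theorem refInfo_reindex (e : V ≃ V') (s : V × X → ℝ) (Q : X → ℝ) :
    refInfo (fun z => s (e.symm z.1, z.2)) Q = refInfo s Q := by
  simp only [refInfo, relEntropy, meanLog, decoupled, probEq_fst, Fintype.sum_prod_type]
  exact e.symm.sum_comp fun v =>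
    ∑ x, s (v, x) * Real.log (s (v, x) / ((∑ x', s (v, x')) * Q x))

/-- `H` bounds the information bottleneck of the source `PX` and the channel `W` at level `L`:
whenever `V → X → Y` with `X ∼ PX` satisfies `I(V;X) ≤ L`, then `I(V;Y) ≤ H` (in nats). Finite
alphabets for `V` are represented by `Fin m`. -/
def IsBottleneckBound (PX : X → ℝ) (W : X → Y → ℝ) (L H : ℝ) : Prop :=
  ∀ (m : ℕ) (s : Fin m × X → ℝ), IsPMF s → probEq s Prod.snd = PX → refInfo s PX ≤ L →
    refInfo (channelPush s W) (outputLaw PX W) ≤ H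

namespace IsBottleneckBound

variable {PX : X → ℝ} {W : X → Y → ℝ} {L H : ℝ} {s : V × X → ℝ}

theorem refInfo_le (h : IsBottleneckBound PX W L H) (hs : IsPMF s) (hsX : probEq s Prod.snd = PX)
    (hL : refInfo s PX ≤ L) : refInfo (channelPush s W) (outputLaw PX W) ≤ H := by
  set e := Fintype.equivFin V
  set s' : Fin (Fintype.card V) × X → ℝ := fun z => s (e.symm z.1, z.2)
  have hs' : IsPMF s' := by
    refine ⟨fun z => hs.1 _, ?_⟩
    rw [← hs.2]
    exact (e.symm.prodCongr (Equiv.refl X)).sum_comp s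
  have hs'X : probEq s' Prod.snd = PX := by
    rw [← hsX]
    funext x
    rw [probEq_snd, probEq_snd]
    exact e.symm.sum_comp fun v => s (v, x)
  rw [← refInfo_reindex e]
  exact h _ s' hs' hs'X ((refInfo_reindex e s PX).le.trans hL)

theorem nonneg (h : IsBottleneckBound PX W L H) (hPX : IsPMF PX) (hW : ∀ x, IsPMF (W x))
    (hL : 0 ≤ L) : 0 ≤ H := by
  set s : Unit × X → ℝ := fun z => PX z.2
  have hs : IsPMF s := ⟨fun z => hPX.1 _, by simpa [s, Fintype.sum_prod_type] using hPX.2⟩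
  have hPY := isPMF_outputLaw hPX hW
  have hinfo : refInfo s PX = 0 := by
    simp [refInfo, relEntropy, meanLog, decoupled, probEq_fst, s, hPX.2]
  refine (refInfo_nonneg (isPMF_channelPush hs hW).1 hPY fun _ _ => id).trans
    (h.refInfo_le hs ?_ (hinfo.le.trans hL))
  funext x
  simp [probEq_snd, s]

theorem refInfo_le_add (h : IsBottleneckBound PX W L H) (hPX : IsPMF PX) (hW : ∀ x, IsPMF (W x))
    (hL : 0 ≤ L) (hs : IsPMF s) (hsX : probEq s Prod.snd = PX) {δ : ℝ} (hδ : 0 ≤ δ)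
    (hLδ : refInfo s PX ≤ L + δ) :
    refInfo (channelPush s W) (outputLaw PX W) ≤ H + δ := by
  have hdpi : refInfo (channelPush s W) (outputLaw PX W) ≤ L + δ := by
    refine (refInfo_channelPush_le hs.1 hPX.1 (fun v x hvx => ?_) hW).trans hLδ
    rw [← hsX]
    exact probEq_ne_zero hs.1 Prod.snd hvx
  rcases hL.eq_or_lt with rfl | hLpos
  · linarith [h.nonneg hPX hW le_rfl]
  -- Reveal `V` only with probability `ν`: this scales both informations by `ν`.
  set ν : ℝ := L / (L + δ)
  have hν : 0 < ν := by positivity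
  have hνL : ν * (L + δ) = L := div_mul_cancel₀ _ (by positivity)
  have hν1 : ν ≤ 1 := div_le_one_of_le₀ (by linarith) (by positivity)
  have hpmf : IsPMF (adjoin ν s fun x => (1 - ν) * PX x) := by
    refine isPMF_adjoin hν.le hs (fun x => mul_nonneg (by linarith) (hPX.1 x)) ?_
    rw [← Finset.mul_sum, hPX.2, mul_one]
  have hmarg : probEq (adjoin ν s fun x => (1 - ν) * PX x) Prod.snd = PX := by
    funext x
    rw [probEq_snd_adjoin, hsX]
    ring
  have hscaled := h.refInfo_le hpmf hmarg <| by
    rw [refInfo_adjoin_const_mul hν.ne' s _ hPX, ← hνL]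
    exact mul_le_mul_of_nonneg_left hLδ hν.le
  rw [channelPush_adjoin, outputLaw_const_mul,
    refInfo_adjoin_const_mul hν.ne' _ _ (isPMF_outputLaw hPX hW)] at hscaled
  nlinarith [mul_le_mul_of_nonneg_left hdpi (sub_nonneg.mpr hν1)]

end IsBottleneckBound

end Bottleneck

/-! ### Stability of the bottleneck under small perturbations of the law -/

section Perturbation

theorem exp_le_one_add_add_sq {z : ℝ} (hz : z ≤ 1) : Real.exp z ≤ 1 + z + z ^ 2 := by
  rcases le_or_gt (-1) z with h | h
  · linarith [(abs_le.mp (Real.abs_exp_sub_one_sub_id_le (abs_le.mpr ⟨h, hz⟩))).2]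
  · nlinarith [Real.exp_le_one_iff.mpr (show z ≤ 0 by linarith)]

theorem mul_log_sq_le_four {v : ℝ} (h0 : 0 < v) (h1 : v ≤ 1) : v * Real.log v ^ 2 ≤ 4 := by
  have hlt := Real.abs_log_mul_self_lt (√v) (Real.sqrt_pos.mpr h0) (Real.sqrt_le_one.mpr h1)
  have hsq : (Real.log (√v) * √v) ^ 2 ≤ 1 := (sq_le_one_iff_abs_le_one _).mpr hlt.le
  rw [mul_pow, Real.sq_sqrt h0.le, Real.log_sqrt h0.le] at hsq
  linarith

theorem sq_sqrt_sub_sqrt_add_sub_le {a b : ℝ} (ha : 0 ≤ a) (hb : 0 ≤ b) (hab : a ≠ 0 → b ≠ 0) :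
    (√a - √b) ^ 2 + a - b ≤ a * Real.log (a / b) := by
  rcases ha.eq_or_lt with rfl | hpos
  · simp [Real.sq_sqrt hb]
  have hpos' : 0 < b := hb.lt_of_ne' (hab hpos.ne')
  have hlog : Real.log (a / b) = 2 * Real.log (√a / √b) := by
    rw [← Real.sqrt_div ha, Real.log_sqrt (div_nonneg ha hb)]
    ring
  have hle := Real.one_sub_inv_le_log_of_pos
    (div_pos (Real.sqrt_pos.mpr hpos) (Real.sqrt_pos.mpr hpos'))
  have hmul : a * (√a / √b)⁻¹ = √a * √b := by
    rw [inv_div, ← mul_div_assoc, mul_comm a, mul_div_assoc, Real.div_sqrt, mul_comm]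
  rw [hlog]
  nlinarith [mul_le_mul_of_nonneg_left hle ha, Real.sq_sqrt ha, Real.sq_sqrt hb]

theorem exists_one_le_exp_mul {α : Type*} [Finite α] {Q : α → ℝ} (hQ : ∀ a, 0 ≤ Q a) :
    ∃ B : ℝ, 0 ≤ B ∧ ∀ a, Q a ≠ 0 → 1 ≤ Real.exp B * Q a := by
  obtain ⟨C, hC⟩ := (Set.finite_range fun a => -Real.log (Q a)).bddAbove
  refine ⟨max 0 C, le_max_left _ _, fun a ha => ?_⟩
  have hpos : 0 < Q a := (hQ a).lt_of_ne' ha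
  rw [← Real.exp_log hpos, ← Real.exp_add, Real.one_le_exp_iff]
  linarith [hC (Set.mem_range_self a), le_max_right 0 C]

variable {Ω V X Y : Type*} [Fintype Ω] [Fintype V] [Fintype X] [Fintype Y]

theorem le_add_of_relEntropy_le_sq {p q : Ω → ℝ} (hp : IsPMF p) (hq : IsPMF q) (hpq : AbsCont p q)
    {d : ℝ} (hd : 0 ≤ d) (h : relEntropy p q ≤ d ^ 2) (ω : Ω) : p ω ≤ q ω + 2 * d := by
  have hsum : ∑ ω, (√(p ω) - √(q ω)) ^ 2 ≤ d ^ 2 := by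
    have := Finset.sum_le_sum fun ω (_ : ω ∈ Finset.univ) =>
      sq_sqrt_sub_sqrt_add_sub_le (hp.1 ω) (hq.1 ω) (@hpq ω)
    rw [Finset.sum_sub_distrib, Finset.sum_add_distrib, hp.2, hq.2] at this
    linarith [show ∑ ω, p ω * Real.log (p ω / q ω) ≤ d ^ 2 from h]
  have hdist : √(p ω) - √(q ω) ≤ d := by
    refine (abs_le.mp (abs_le_of_sq_le_sq ?_ hd)).2
    exact (Finset.single_le_sum (f := fun ω => (√(p ω) - √(q ω)) ^ 2) (fun _ _ => sq_nonneg _)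
      (Finset.mem_univ ω)).trans hsum
  have hle_one : ∀ {r : Ω → ℝ}, IsPMF r → √(r ω) ≤ 1 := fun hr =>
    Real.sqrt_le_one.mpr (hr.2 ▸ Finset.single_le_sum (fun ω _ => hr.1 ω) (Finset.mem_univ ω))
  nlinarith [Real.sq_sqrt (hp.1 ω), Real.sq_sqrt (hq.1 ω), hle_one hp, hle_one hq,
    Real.sqrt_nonneg (p ω), Real.sqrt_nonneg (q ω)]

theorem le_mul_of_relEntropy_le_sq {p q : Ω → ℝ} (hp : IsPMF p) (hq : IsPMF q) (hpq : AbsCont p q)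
    {B d : ℝ} (hB : ∀ ω, q ω ≠ 0 → 1 ≤ Real.exp B * q ω) (hd : 0 ≤ d)
    (h : relEntropy p q ≤ d ^ 2) (ω : Ω) : p ω ≤ (1 + 2 * d * Real.exp B) * q ω := by
  rcases eq_or_ne (p ω) 0 with h0 | h0
  · rw [h0]
    exact mul_nonneg (by positivity) (hq.1 ω)
  · linarith [le_add_of_relEntropy_le_sq hp hq hpq hd h ω,
      mul_le_mul_of_nonneg_left (hB ω (hpq h0)) hd]

/- The Donsker–Varadhan inequality: compare `p` with the weight `q · exp (t φ)`. -/
theorem mul_sum_le_relEntropy_add {p q φ : Ω → ℝ} (hp : ∀ ω, 0 ≤ p ω) (hq : ∀ ω, 0 ≤ q ω)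
    (hpq : AbsCont p q) (hmass : ∑ ω, q ω ≤ ∑ ω, p ω) {t : ℝ}
    (hφ : ∀ ω, q ω ≠ 0 → t * φ ω ≤ 1) :
    t * ∑ ω, p ω * φ ω ≤
      relEntropy p q + t * ∑ ω, q ω * φ ω + t ^ 2 * ∑ ω, q ω * φ ω ^ 2 := by
  have hexp : AbsCont p fun ω => Real.exp (t * φ ω) := fun ω _ => (Real.exp_pos _).ne'
  have hpr : AbsCont p fun ω => q ω * Real.exp (t * φ ω) :=
    fun ω h => mul_ne_zero (hpq h) (hexp h)
  have htilt := sum_sub_sum_le_relEntropy hp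
    (fun ω => mul_nonneg (hq ω) (Real.exp_pos (t * φ ω)).le) hpr
  have hmean : meanLog p (fun ω => Real.exp (t * φ ω)) = t * ∑ ω, p ω * φ ω := by
    simp only [meanLog, Real.log_exp, Finset.mul_sum, mul_left_comm]
  rw [relEntropy_eq_sub hpr, meanLog_mul hpq hexp, hmean] at htilt
  have hquad : ∑ ω, q ω * Real.exp (t * φ ω) ≤
      ∑ ω, q ω + t * ∑ ω, q ω * φ ω + t ^ 2 * ∑ ω, q ω * φ ω ^ 2 := by
    simp only [Finset.mul_sum, ← Finset.sum_add_distrib]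
    refine Finset.sum_le_sum fun ω _ => ?_
    rcases eq_or_ne (q ω) 0 with h0 | h0
    · simp [h0]
    · exact (mul_le_mul_of_nonneg_left (exp_le_one_add_add_sq (hφ ω h0)) (hq ω)).trans_eq (by ring)
  rw [relEntropy_eq_sub hpq]
  linarith

theorem le_exp_mul_decoupled {s : V × X → ℝ} {Q : X → ℝ} {B : ℝ} (hs : ∀ z, 0 ≤ s z)
    (hQ : ∀ x, 0 ≤ Q x) (hB : ∀ x, Q x ≠ 0 → 1 ≤ Real.exp B * Q x)
    (hsQ : ∀ v x, s (v, x) ≠ 0 → Q x ≠ 0) (z : V × X) : s z ≤ Real.exp B * decoupled s Q z := by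
  rcases eq_or_ne (s z) 0 with h0 | h0
  · rw [h0]
    exact mul_nonneg (Real.exp_pos B).le (decoupled_nonneg hs hQ z)
  · calc s z ≤ probEq s Prod.fst z.1 := le_probEq hs Prod.fst z
      _ ≤ probEq s Prod.fst z.1 * (Real.exp B * Q z.2) :=
        le_mul_of_one_le_right (probEq_nonneg hs _ _) (hB _ (hsQ _ _ h0))
      _ = Real.exp B * decoupled s Q z := by rw [decoupled, mul_left_comm]

theorem mul_log_div_sq_le {r q Q B : ℝ} (hr : 0 < r) (hrq : r ≤ q) (hQ : 0 < Q) (hQ1 : Q ≤ 1)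
    (hB : 1 ≤ Real.exp B * Q) : r * Real.log (r / (q * Q)) ^ 2 ≤ q * (8 + 2 * B ^ 2) := by
  have hq : 0 < q := hr.trans_le hrq
  set v := r / q
  have hv : 0 < v := div_pos hr hq
  have hv1 : v ≤ 1 := (div_le_one hq).mpr hrq
  have hr_eq : r = q * v := (mul_div_cancel₀ r hq.ne').symm
  have hlogQ : -B ≤ Real.log Q := by
    have := Real.log_nonneg hB
    rw [Real.log_mul (Real.exp_pos B).ne' hQ.ne', Real.log_exp] at this
    linarith
  have hlogQ_sq : Real.log Q ^ 2 ≤ B ^ 2 := by nlinarith [Real.log_nonpos hQ.le hQ1]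
  rw [div_mul_eq_div_div, Real.log_div hv.ne' hQ.ne', hr_eq, mul_assoc]
  refine mul_le_mul_of_nonneg_left ?_ hq.le
  calc v * (Real.log v - Real.log Q) ^ 2 ≤ v * (2 * Real.log v ^ 2 + 2 * B ^ 2) :=
        mul_le_mul_of_nonneg_left (by nlinarith [sq_nonneg (Real.log v + Real.log Q)]) hv.le
    _ ≤ 8 + 2 * B ^ 2 := by nlinarith [mul_log_sq_le_four hv hv1, sq_nonneg B]

theorem sum_mul_log_sq_le {s : V × X → ℝ} {Q : X → ℝ} {B : ℝ} (hs : IsPMF s) (hQ : IsPMF Q)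
    (hB : ∀ x, Q x ≠ 0 → 1 ≤ Real.exp B * Q x) (hsQ : ∀ v x, s (v, x) ≠ 0 → Q x ≠ 0) :
    ∑ z, s z * Real.log (s z / decoupled s Q z) ^ 2 ≤ Fintype.card X * (8 + 2 * B ^ 2) := by
  have hterm : ∀ z, s z * Real.log (s z / decoupled s Q z) ^ 2 ≤
      probEq s Prod.fst z.1 * (8 + 2 * B ^ 2) := by
    intro z
    rcases eq_or_ne (s z) 0 with h0 | h0
    · rw [h0, zero_mul]
      exact mul_nonneg (probEq_nonneg hs.1 _ _) (by positivity)
    · have hQz := hsQ z.1 z.2 h0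
      exact mul_log_div_sq_le ((hs.1 z).lt_of_ne' h0) (le_probEq hs.1 Prod.fst z)
        ((hQ.1 _).lt_of_ne' hQz)
        (hQ.2 ▸ Finset.single_le_sum (fun x _ => hQ.1 x) (Finset.mem_univ z.2)) (hB _ hQz)
  refine (Finset.sum_le_sum fun z _ => hterm z).trans_eq ?_
  simp only [Fintype.sum_prod_type, Finset.sum_const, Finset.card_univ, nsmul_eq_mul]
  rw [← Finset.mul_sum, ← Finset.sum_mul, sum_probEq, hs.2, one_mul]

theorem refInfo_le_refInfo_add {s r : V × X → ℝ} {Q : X → ℝ} {B δ t : ℝ} (hs : IsPMF s)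
    (hr : IsPMF r) (hQ : IsPMF Q) (hB : ∀ x, Q x ≠ 0 → 1 ≤ Real.exp B * Q x)
    (hrQ : ∀ v x, r (v, x) ≠ 0 → Q x ≠ 0) (hsr : AbsCont s r)
    (hfst : probEq s Prod.fst = probEq r Prod.fst) (ht : 0 < t) (htB : t * B ≤ 1)
    (hδ : relEntropy s r ≤ δ) :
    refInfo s Q ≤ refInfo r Q + (t * (Fintype.card X * (8 + 2 * B ^ 2)) + δ / t + δ) := by
  have hdec : decoupled s Q = decoupled r Q := by unfold decoupled; rw [hfst]
  have hrd : AbsCont r (decoupled r Q) := absCont_decoupled hr.1 hrQ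
  set φ : V × X → ℝ := fun z => Real.log (r z / decoupled r Q z)
  have hsplit : refInfo s Q = ∑ z, s z * φ z + relEntropy s r := by
    have hrsd : AbsCont s (decoupled r Q) := fun z h => hrd (hsr h)
    rw [refInfo, hdec, relEntropy_eq_sub hrsd, relEntropy_eq_sub hsr,
      show ∑ z, s z * φ z = meanLog s r - meanLog s (decoupled r Q) from meanLog_div hsr hrsd]
    ring
  have hφ : ∀ z, r z ≠ 0 → t * φ z ≤ 1 := by
    intro z hz
    have hpos := (hr.1 z).lt_of_ne' hz
    have hdpos := (decoupled_nonneg hr.1 hQ.1 z).lt_of_ne' (hrd hz)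
    refine (mul_le_mul_of_nonneg_left ?_ ht.le).trans htB
    rw [← Real.log_exp B]
    exact Real.log_le_log (div_pos hpos hdpos)
      ((div_le_iff₀ hdpos).mpr (le_exp_mul_decoupled hr.1 hQ.1 hB hrQ z))
  have hfirst : ∑ z, r z * φ z = refInfo r Q := rfl
  have hsecond : ∑ z, r z * φ z ^ 2 ≤ Fintype.card X * (8 + 2 * B ^ 2) :=
    sum_mul_log_sq_le hr hQ hB hrQ
  have hDV := mul_sum_le_relEntropy_add hs.1 hr.1 hsr (by rw [hs.2, hr.2]) hφ
  have hmean : ∑ z, s z * φ z ≤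
      refInfo r Q + t * (Fintype.card X * (8 + 2 * B ^ 2)) + δ / t := by
    refine le_of_mul_le_mul_left ?_ ht
    rw [mul_add, mul_add, mul_div_cancel₀ δ ht.ne']
    rw [hfirst] at hDV
    nlinarith [mul_le_mul_of_nonneg_left hsecond (sq_nonneg t)]
  linarith

theorem relEntropy_sum_mul_le {ρ Q : X → ℝ} {B : ℝ} (hρ : ∀ x, 0 ≤ ρ x) (hQ : ∀ x, 0 ≤ Q x)
    (hB : ∀ x, Q x ≠ 0 → 1 ≤ Real.exp B * Q x) (hρQ : AbsCont ρ Q) :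
    relEntropy ρ (fun x => (∑ x', ρ x') * Q x) ≤ (∑ x, ρ x) * B := by
  have hmass : 0 ≤ ∑ x, ρ x := Finset.sum_nonneg fun x _ => hρ x
  refine relEntropy_le_sum_mul_of_le_exp_mul hρ fun x => ?_
  rcases eq_or_ne (ρ x) 0 with h0 | h0
  · rw [h0]
    exact mul_nonneg (Real.exp_pos B).le (mul_nonneg hmass (hQ x))
  · calc ρ x ≤ ∑ x', ρ x' := Finset.single_le_sum (fun x _ => hρ x) (Finset.mem_univ x)
      _ ≤ (∑ x', ρ x') * (Real.exp B * Q x) := le_mul_of_one_le_right hmass (hB x (hρQ h0))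
      _ = Real.exp B * ((∑ x', ρ x') * Q x) := mul_left_comm _ _ _

theorem relEntropy_sum_mul_nonneg {ρ Q : X → ℝ} (hρ : ∀ x, 0 ≤ ρ x) (hQ : IsPMF Q)
    (hρQ : AbsCont ρ Q) : 0 ≤ relEntropy ρ (fun x => (∑ x', ρ x') * Q x) := by
  refine relEntropy_nonneg hρ (fun x => mul_nonneg (Finset.sum_nonneg fun x _ => hρ x) (hQ.1 x))
    (fun x h0 => mul_ne_zero ?_ (hρQ h0)) (by rw [← Finset.mul_sum, hQ.2, mul_one])
  exact (((hρ x).lt_of_ne' h0).trans_le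
    (Finset.single_le_sum (fun x _ => hρ x) (Finset.mem_univ x))).ne'

variable {PX : X → ℝ} {W : X → Y → ℝ} {L H : ℝ}

theorem outputLaw_ne_zero_of_channelPush (hPX : IsPMF PX) (hW : ∀ x, IsPMF (W x))
    {U : Type*} {s : U × X → ℝ} (hsPX : ∀ u x, s (u, x) ≠ 0 → PX x ≠ 0) {u : U} {y : Y}
    (h : channelPush s W (u, y) ≠ 0) : outputLaw PX W y ≠ 0 := by
  obtain ⟨x, -, hx⟩ := Finset.exists_ne_zero_of_sum_ne_zero h
  exact outputLaw_ne_zero hPX hW (hsPX u x (left_ne_zero_of_mul hx)) (right_ne_zero_of_mul hx)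

theorem refInfo_input_le {s : V × X × Y → ℝ} (hs : ∀ z, 0 ≤ s z) (hPX : ∀ x, 0 ≤ PX x)
    (hW : ∀ x, IsPMF (W x)) (hsupp : ∀ v x y, s (v, x, y) ≠ 0 → PX x * W x y ≠ 0) :
    refInfo (probEq s fun z => (z.1, z.2.1)) PX ≤ refInfo s (fun z => PX z.1 * W z.1 z.2) := by
  have hmarg : probEq (fun z : X × Y => PX z.1 * W z.1 z.2) Prod.fst = PX := by
    funext x
    simp [probEq_fst, ← Finset.mul_sum, (hW x).2]
  have hle := refInfo_map_le (Q := fun z : X × Y => PX z.1 * W z.1 z.2) hs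
    (fun z => mul_nonneg (hPX _) ((hW _).1 _)) (fun v z => hsupp v z.1 z.2) id Prod.fst
  rwa [hmarg] at hle

theorem source_ne_zero_of_input {s : V × X × Y → ℝ}
    (hsupp : ∀ v x y, s (v, x, y) ≠ 0 → PX x * W x y ≠ 0) (v : V) (x : X)
    (h : probEq s (fun z => (z.1, z.2.1)) (v, x) ≠ 0) : PX x ≠ 0 := by
  obtain ⟨⟨v, x, y⟩, hz, heq⟩ := exists_of_probEq_ne_zero h
  cases heq
  exact left_ne_zero_of_mul (hsupp v x y hz)

theorem refInfo_output_le {s : V × X × Y → ℝ} (hs : IsPMF s) (hPX : IsPMF PX)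
    (hW : ∀ x, IsPMF (W x)) (hsupp : ∀ v x y, s (v, x, y) ≠ 0 → PX x * W x y ≠ 0) {B δ t : ℝ}
    (hB : ∀ y, outputLaw PX W y ≠ 0 → 1 ≤ Real.exp B * outputLaw PX W y) (ht : 0 < t)
    (htB : t * B ≤ 1)
    (hδ : relEntropy s (channelJoint (probEq s fun z => (z.1, z.2.1)) W) ≤ δ) :
    refInfo (probEq s fun z => (z.1, z.2.2)) (outputLaw PX W) ≤
      refInfo (channelPush (probEq s fun z => (z.1, z.2.1)) W) (outputLaw PX W) +
        (t * (Fintype.card Y * (8 + 2 * B ^ 2)) + δ / t + δ) := by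
  set r := probEq s fun z => (z.1, z.2.1)
  have hr : IsPMF r := isPMF_probEq hs _
  have hsJ : AbsCont s (channelJoint r W) := fun z hz =>
    mul_ne_zero (probEq_ne_zero hs.1 (fun z => (z.1, z.2.1)) hz)
      (right_ne_zero_of_mul (hsupp _ _ _ hz))
  have hJ := isPMF_channelJoint hr hW
  refine refInfo_le_refInfo_add (isPMF_probEq hs _) (isPMF_channelPush hr hW)
    (isPMF_outputLaw hPX hW) hB (fun _ _ => outputLaw_ne_zero_of_channelPush hPX hW
      (source_ne_zero_of_input hsupp)) ?_ ?_ ht htB ?_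
  · rw [← probEq_channelJoint_output]
    exact hsJ.law hJ.1 _
  · funext v
    rw [probEq_fst_channelPush r hW, probEq_probEq, probEq_probEq]
  · rw [← probEq_channelJoint_output]
    exact (relEntropy_probEq_le hs.1 hJ.1 hsJ _).trans hδ

namespace IsBottleneckBound

theorem mul_refInfo_le_of_mul_marginal_le (h : IsBottleneckBound PX W L H) (hPX : IsPMF PX)
    (hW : ∀ x, IsPMF (W x)) (hL : 0 ≤ L) {B δ ν : ℝ} (hB0 : 0 ≤ B)
    (hB : ∀ x, PX x ≠ 0 → 1 ≤ Real.exp B * PX x) (hδ : 0 ≤ δ) {s : V × X → ℝ} (hs : IsPMF s)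
    (hν : 0 < ν) (hν1 : ν ≤ 1) (hle : ∀ x, ν * probEq s Prod.snd x ≤ PX x)
    (hI : refInfo s PX ≤ L + δ) :
    ν * refInfo (channelPush s W) (outputLaw PX W) ≤ H + (δ + (1 - ν) * B) := by
  set ρ : X → ℝ := fun x => PX x - ν * probEq s Prod.snd x
  have hρ : ∀ x, 0 ≤ ρ x := fun x => sub_nonneg.mpr (hle x)
  have hρ_le : ∀ x, ρ x ≤ PX x := fun x =>
    sub_le_self _ (mul_nonneg hν.le (probEq_nonneg hs.1 _ _))
  have hmass : ∑ x, ρ x = 1 - ν := by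
    rw [Finset.sum_sub_distrib, hPX.2, ← Finset.mul_sum, sum_probEq, hs.2, mul_one]
  have hmarg : probEq (adjoin ν s ρ) Prod.snd = PX := by
    funext x
    rw [probEq_snd_adjoin]
    ring
  have hρPX : AbsCont ρ PX := AbsCont.of_le_mul (c := 1) hρ (by simpa using hρ_le)
  have hI' : refInfo (adjoin ν s ρ) PX ≤ L + (δ + (1 - ν) * B) := by
    rw [refInfo_adjoin hν.ne', ← add_assoc]
    have hscale : ν * refInfo s PX ≤ L + δ :=
      (mul_le_mul_of_nonneg_left hI hν.le).trans (mul_le_of_le_one_left (add_nonneg hL hδ) hν1)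
    have hrest := relEntropy_sum_mul_le hρ hPX.1 hB hρPX
    rw [hmass] at hrest ⊢
    exact add_le_add hscale hrest
  have hbound := h.refInfo_le_add hPX hW hL (isPMF_adjoin hν.le hs hρ hmass) hmarg
    (add_nonneg hδ (mul_nonneg (sub_nonneg.mpr hν1) hB0)) hI'
  rw [channelPush_adjoin, refInfo_adjoin hν.ne'] at hbound
  have hρW : ∀ y, 0 ≤ outputLaw ρ W y := fun y =>
    Finset.sum_nonneg fun x _ => mul_nonneg (hρ x) ((hW x).1 y)
  have hrest := relEntropy_sum_mul_nonneg hρW (isPMF_outputLaw hPX hW) <|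
    AbsCont.of_le_mul (c := 1) hρW fun y => (Finset.sum_le_sum fun x _ =>
      mul_le_mul_of_nonneg_right (hρ_le x) ((hW x).1 y)).trans_eq (one_mul _).symm
  linarith

theorem refInfo_channelPush_le_of_relEntropy_le (h : IsBottleneckBound PX W L H) (hPX : IsPMF PX)
    (hW : ∀ x, IsPMF (W x)) (hL : 0 ≤ L) {B d : ℝ} (hB0 : 0 ≤ B)
    (hBX : ∀ x, PX x ≠ 0 → 1 ≤ Real.exp B * PX x)
    (hBY : ∀ y, outputLaw PX W y ≠ 0 → 1 ≤ Real.exp B * outputLaw PX W y) (hd : 0 ≤ d)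
    {s : V × X → ℝ} (hs : IsPMF s) (hsPX : ∀ v x, s (v, x) ≠ 0 → PX x ≠ 0)
    (hI : refInfo s PX ≤ L + d ^ 2) (hD : relEntropy (probEq s Prod.snd) PX ≤ d ^ 2) :
    refInfo (channelPush s W) (outputLaw PX W) ≤ H + (d ^ 2 + 4 * d * Real.exp B * B) := by
  set κ := 2 * d * Real.exp B
  have hκ : 0 ≤ κ := by positivity
  set ν := (1 + κ)⁻¹
  have hν : 0 < ν := by positivity
  have hνκ : ν * (1 + κ) = 1 := inv_mul_cancel₀ (by positivity)
  have hν1 : ν ≤ 1 := by nlinarith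
  have hmarg : AbsCont (probEq s Prod.snd) PX := fun x hx => by
    obtain ⟨⟨v, x⟩, hz, rfl⟩ := exists_of_probEq_ne_zero hx
    exact hsPX v x hz
  have hclose : ∀ x, ν * probEq s Prod.snd x ≤ PX x := fun x => by
    have hle := le_mul_of_relEntropy_le_sq (isPMF_probEq hs Prod.snd) hPX hmarg hBX hd hD x
    calc ν * probEq s Prod.snd x ≤ ν * ((1 + κ) * PX x) := mul_le_mul_of_nonneg_left hle hν.le
      _ = PX x := by rw [← mul_assoc, hνκ, one_mul]
  have hscaled := h.mul_refInfo_le_of_mul_marginal_le hPX hW hL hB0 hBX (sq_nonneg d) hs hν hν1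
    hclose hI
  have hle_B : refInfo (channelPush s W) (outputLaw PX W) ≤ B :=
    relEntropy_le_of_le_exp_mul (isPMF_channelPush hs hW) <|
      le_exp_mul_decoupled (isPMF_channelPush hs hW).1 (isPMF_outputLaw hPX hW).1 hBY
        fun _ _ => outputLaw_ne_zero_of_channelPush hPX hW hsPX
  have hdefect : 1 - ν ≤ κ := by nlinarith
  calc refInfo (channelPush s W) (outputLaw PX W)
      = ν * refInfo (channelPush s W) (outputLaw PX W) +
        (1 - ν) * refInfo (channelPush s W) (outputLaw PX W) := by ring
    _ ≤ H + (d ^ 2 + (1 - ν) * B) + (1 - ν) * B :=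
      add_le_add hscaled (mul_le_mul_of_nonneg_left hle_B (sub_nonneg.mpr hν1))
    _ ≤ H + (d ^ 2 + κ * B) + κ * B := by gcongr
    _ = H + (d ^ 2 + 4 * d * Real.exp B * B) := by ring

theorem exists_stable (h : IsBottleneckBound PX W L H) (hPX : IsPMF PX) (hW : ∀ x, IsPMF (W x))
    (hL : 0 ≤ L) {ε : ℝ} (hε : 0 < ε) :
    ∃ δ > 0, ∀ {V : Type*} [Fintype V] {s : V × X × Y → ℝ}, IsPMF s →
      (∀ v x y, s (v, x, y) ≠ 0 → PX x * W x y ≠ 0) →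
      refInfo s (fun z => PX z.1 * W z.1 z.2) ≤ L + δ →
      relEntropy s (channelJoint (probEq s fun z => (z.1, z.2.1)) W) ≤ δ →
      relEntropy (probEq s fun z => z.2.1) PX ≤ δ →
      refInfo (probEq s fun z => (z.1, z.2.2)) (outputLaw PX W) ≤ H + ε := by
  have hPY := isPMF_outputLaw hPX hW
  obtain ⟨B, hB0, hB⟩ := exists_one_le_exp_mul (Q := Sum.elim PX (outputLaw PX W))
    (Sum.rec hPX.1 hPY.1)
  have hBX : ∀ x, PX x ≠ 0 → 1 ≤ Real.exp B * PX x := fun x => hB (.inl x)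
  have hBY : ∀ y, outputLaw PX W y ≠ 0 → 1 ≤ Real.exp B * outputLaw PX W y := fun y => hB (.inr y)
  set c : ℝ := Fintype.card Y * (8 + 2 * B ^ 2)
  have hC : 0 < 3 + 4 * Real.exp B * B + c := by positivity
  obtain ⟨d, hd, hd1, hdB, hdε⟩ : ∃ d > 0, d ≤ 1 ∧ d * B ≤ 1 ∧
      d * (3 + 4 * Real.exp B * B + c) ≤ ε := by
    refine ⟨min 1 (min (1 / (B + 1)) (ε / (3 + 4 * Real.exp B * B + c))), by positivity,
      min_le_left _ _, ?_, ?_⟩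
    · refine (mul_le_mul_of_nonneg_right ((min_le_right _ _).trans (min_le_left _ _)) hB0).trans ?_
      rw [div_mul_eq_mul_div, one_mul, div_le_one (by positivity)]
      linarith
    · rw [← le_div_iff₀ hC]
      exact (min_le_right _ _).trans (min_le_right _ _)
  refine ⟨d ^ 2, by positivity, fun {V} _ {s} hs hsupp hI hK hX => ?_⟩
  have hinput := (refInfo_input_le hs.1 hPX.1 hW hsupp).trans hI
  have houtput := refInfo_output_le hs hPX hW hsupp hBY hd hdB hK
  have hpush := h.refInfo_channelPush_le_of_relEntropy_le hPX hW hL hB0 hBX hBY hd.le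
    (isPMF_probEq hs fun z => (z.1, z.2.1)) (source_ne_zero_of_input hsupp) hinput
    (by rwa [probEq_probEq])
  have hd2 : d ^ 2 / d = d := by rw [sq, mul_self_div_self]
  rw [hd2] at houtput
  nlinarith

end IsBottleneckBound

end Perturbation

/-! ### Memoryless laws, resampling and time sharing -/

section PiLaw

variable {ι : Type*} [Fintype ι] {A : ι → Type*}

/-- The law of independent coordinates with the laws `w i`. -/
def piLaw (w : ∀ i, A i → ℝ) (ω : ∀ i, A i) : ℝ := ∏ i, w i (ω i)

theorem isPMF_piLaw [DecidableEq ι] [∀ i, Fintype (A i)] {w : ∀ i, A i → ℝ}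
    (hw : ∀ i, IsPMF (w i)) : IsPMF (piLaw w) := by
  refine ⟨fun ω => Finset.prod_nonneg fun i _ => (hw i).1 _, ?_⟩
  simp only [piLaw]
  rw [← Fintype.piFinset_univ, ← Finset.prod_univ_sum]
  simp [fun i => (hw i).2]

end PiLaw

section Iid

variable {ι Γ Δ : Type*} [Fintype ι]

/-- The law of a family of independent letters with the common law `P`. -/
def iidLaw (P : Γ → ℝ) (ω : ι → Γ) : ℝ := ∏ t, P (ω t)

theorem ne_zero_of_iidLaw_ne_zero {P : Γ → ℝ} {ω : ι → Γ} (h : iidLaw P ω ≠ 0) (t : ι) :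
    P (ω t) ≠ 0 :=
  Finset.prod_ne_zero_iff.mp h t (Finset.mem_univ t)

variable [DecidableEq ι] [Fintype Γ]

theorem isPMF_iidLaw {P : Γ → ℝ} (hP : IsPMF P) : IsPMF (iidLaw P : (ι → Γ) → ℝ) :=
  isPMF_piLaw fun _ => hP

theorem probEq_iidLaw (P : Γ → ℝ) (f : Γ → Δ) :
    probEq (iidLaw P) (fun (ω : ι → Γ) t => f (ω t)) = iidLaw (probEq P f) := by
  classical
  funext v
  simp only [iidLaw, probEq]
  rw [Finset.prod_univ_sum, Fintype.piFinset_univ]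
  refine Finset.sum_congr rfl fun ω _ => ?_
  rw [Finset.prod_ite_zero]
  simp [funext_iff]

end Iid

/-- The function `get` is a coordinate on `Ω` whose value can be replaced, by means of `set`,
without affecting the rest of the outcome. -/
structure IsReplaceable {Ω B : Type*} (get : Ω → B) (set : Ω → B → Ω) : Prop where
  get_set : ∀ ω b, get (set ω b) = b
  set_set : ∀ ω b b', set (set ω b) b' = set ω b'
  set_get : ∀ ω, set ω (get ω) = ω

section Resampling

theorem isReplaceable_update {ι : Type*} [DecidableEq ι] {A : ι → Type*} (i : ι) :
    IsReplaceable (fun ω : ∀ i, A i => ω i) (fun ω a => Function.update ω i a) where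
  get_set ω a := Function.update_self i a ω
  set_set ω a a' := Function.update_idem a a' ω
  set_get ω := Function.update_eq_self i ω

theorem isReplaceable_update_snd_snd {ι C X Y : Type*} [DecidableEq ι] (t : ι) :
    IsReplaceable (fun ω : ι → C × X × Y => (ω t).2.2)
      (fun ω y => Function.update ω t ((ω t).1, (ω t).2.1, y)) where
  get_set ω y := by simp
  set_set ω y y' := by simp
  set_get ω := by simp

variable {Ω B σ : Type*} [Fintype Ω] [Fintype B] {get : Ω → B} {set : Ω → B → Ω} {S : Ω → σ}

namespace IsReplaceable

theorem sum_sum (h : IsReplaceable get set) (F : Ω → ℝ) :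
    ∑ ω, ∑ b, F (set ω b) = Fintype.card B * ∑ ω, F ω := by
  have hinv : Function.Involutive fun z : Ω × B => (set z.1 z.2, get z.1) := fun z => by
    simp only [h.get_set, h.set_set, h.set_get]
  have hswap := Equiv.sum_comp hinv.toPerm fun z => F z.1
  simp only [Function.Involutive.coe_toPerm, Fintype.sum_prod_type] at hswap
  rw [hswap, Finset.mul_sum]
  simp

theorem card_mul_probEq_pair (h : IsReplaceable get set) (hS : ∀ ω b, S (set ω b) = S ω)
    {r : Ω → ℝ} (hr : ∀ ω b, r (set ω b) = r ω) (W : σ → B → ℝ) (s : σ) (b : B) :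
    Fintype.card B * probEq (fun ω => r ω * W (S ω) (get ω)) (fun ω => (S ω, get ω)) (s, b) =
      probEq r S s * W s b := by
  classical
  rw [probEq, ← h.sum_sum, probEq, Finset.sum_mul]
  simp only [h.get_set, hS, hr, Prod.mk.injEq, ite_and]
  refine Finset.sum_congr rfl fun ω _ => ?_
  by_cases hs : S ω = s <;> simp [hs]

theorem card_mul_probEq (h : IsReplaceable get set) (hS : ∀ ω b, S (set ω b) = S ω)
    {r : Ω → ℝ} (hr : ∀ ω b, r (set ω b) = r ω) {W : σ → B → ℝ} (hW : ∀ s, ∑ b, W s b = 1)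
    (s : σ) :
    Fintype.card B * probEq (fun ω => r ω * W (S ω) (get ω)) S s = probEq r S s := by
  rw [← sum_probEq_prod _ S get, Finset.mul_sum]
  simp only [h.card_mul_probEq_pair hS hr, ← Finset.mul_sum, hW, mul_one]

theorem probEq_pair (h : IsReplaceable get set) (hS : ∀ ω b, S (set ω b) = S ω)
    {r : Ω → ℝ} (hr : ∀ ω b, r (set ω b) = r ω) {W : σ → B → ℝ} (hW : ∀ s, ∑ b, W s b = 1)
    (s : σ) (b : B) :
    probEq (fun ω => r ω * W (S ω) (get ω)) (fun ω => (S ω, get ω)) (s, b) =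
      probEq (fun ω => r ω * W (S ω) (get ω)) S s * W s b := by
  have hcard : (Fintype.card B : ℝ) ≠ 0 := by
    have : Nonempty B := ⟨b⟩
    exact Nat.cast_ne_zero.mpr Fintype.card_ne_zero
  refine mul_left_cancel₀ hcard ?_
  rw [h.card_mul_probEq_pair hS hr, ← mul_assoc, h.card_mul_probEq hS hr hW]

theorem probEq_eq_probEq [Nonempty B] (h : IsReplaceable get set) (hS : ∀ ω b, S (set ω b) = S ω)
    {r : Ω → ℝ} (hr : ∀ ω b, r (set ω b) = r ω) {W W' : σ → B → ℝ} (hW : ∀ s, ∑ b, W s b = 1)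
    (hW' : ∀ s, ∑ b, W' s b = 1) :
    probEq (fun ω => r ω * W (S ω) (get ω)) S = probEq (fun ω => r ω * W' (S ω) (get ω)) S := by
  have hcard : (Fintype.card B : ℝ) ≠ 0 := Nat.cast_ne_zero.mpr Fintype.card_ne_zero
  funext s
  refine mul_left_cancel₀ hcard ?_
  rw [h.card_mul_probEq hS hr hW, h.card_mul_probEq hS hr hW']

end IsReplaceable

variable {ι : Type*} [Fintype ι] [DecidableEq ι] {A : ι → Type*} [∀ i, Fintype (A i)]
  {w : ∀ i, A i → ℝ}

theorem probEq_piLaw_pair {i : ι} (hw : ∑ a, w i a = 1) {S : (∀ i, A i) → σ}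
    (hS : ∀ ω a, S (Function.update ω i a) = S ω) (s : σ) (a : A i) :
    probEq (piLaw w) (fun ω => (S ω, ω i)) (s, a) = probEq (piLaw w) S s * w i a := by
  have hsplit : piLaw w = fun ω => (∏ l ∈ Finset.univ.erase i, w l (ω l)) * w i (ω i) := by
    funext ω
    exact (Finset.prod_erase_mul _ _ (Finset.mem_univ i)).symm
  rw [hsplit]
  refine (isReplaceable_update i).probEq_pair hS (fun ω a => ?_) (W := fun _ => w i)
    (fun _ => hw) s a
  exact Finset.prod_congr rfl fun l hl => by rw [Function.update_of_ne (Finset.ne_of_mem_erase hl)]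

theorem probEq_piLaw_apply (hw : ∀ i, IsPMF (w i)) (i : ι) :
    probEq (piLaw w) (fun ω => ω i) = w i := by
  funext a
  have hunit : probEq (piLaw w) (fun _ => ()) () = 1 := by
    simpa [probEq] using (isPMF_piLaw hw).2
  have hpair := probEq_piLaw_pair (S := fun _ => ()) (hw i).2 (fun _ _ => rfl) () a
  rw [hunit, one_mul] at hpair
  rw [← hpair]
  exact probEq_congr _ fun ω => by simp

end Resampling

section TimeSharing

variable {n : ℕ} {Ω α β : Type*}

/-- The joint law of an independent uniform time in `Fin n` and an outcome of law `p`. -/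
def timeShare (n : ℕ) (p : Ω → ℝ) (z : Fin n × Ω) : ℝ := p z.2 / n

variable [Fintype Ω]

theorem isPMF_timeShare (hn : 0 < n) {p : Ω → ℝ} (hp : IsPMF p) : IsPMF (timeShare n p) := by
  refine ⟨fun z => div_nonneg (hp.1 _) n.cast_nonneg, ?_⟩
  have hn' : (n : ℝ) ≠ 0 := Nat.cast_ne_zero.mpr hn.ne'
  simp [timeShare, Fintype.sum_prod_type, ← Finset.sum_div, hp.2, hn']

theorem probEq_timeShare (p : Ω → ℝ) {F : Fin n × Ω → α} {G : Ω → β} {t : Fin n} {a : α} {b : β}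
    (h : ∀ i ω, F (i, ω) = a ↔ i = t ∧ G ω = b) :
    probEq (timeShare n p) F a = probEq p G b / n := by
  classical
  simp only [probEq, timeShare, Fintype.sum_prod_type, h, ite_and]
  rw [Finset.sum_eq_single t (fun i _ hi => by simp [hi]) (by simp), Finset.sum_div]
  exact Finset.sum_congr rfl fun ω _ => by simp [ite_div]

theorem probEq_timeShare_pair (p : Ω → ℝ) (U : Fin n → Ω → α) (A : Fin n → Ω → β) (t : Fin n)
    (u : α) (a : β) :
    probEq (timeShare n p) (fun z => ((z.1, U z.1 z.2), A z.1 z.2)) ((t, u), a) =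
      probEq p (fun ω => (U t ω, A t ω)) (u, a) / n :=
  probEq_timeShare p fun i ω => by
    simp only [Prod.mk.injEq, and_assoc]
    exact and_congr_right fun hi => by rw [hi]

theorem meanLog_timeShare (p : Ω → ℝ) (F : Fin n × Ω → ℝ) :
    meanLog (timeShare n p) F = (∑ t, meanLog p fun ω => F (t, ω)) / n := by
  simp only [meanLog, timeShare, Fintype.sum_prod_type, Finset.sum_div, div_mul_eq_mul_div]

variable {V X : Type*} [Fintype V] [Fintype X]

theorem refInfo_timeShare (p : Ω → ℝ) (U : Fin n → Ω → V) (A : Fin n → Ω → X) (Q : X → ℝ) :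
    refInfo (probEq (timeShare n p) fun z => ((z.1, U z.1 z.2), A z.1 z.2)) Q =
      (∑ t, refInfo (probEq p fun ω => (U t ω, A t ω)) Q) / n := by
  rw [refInfo_probEq, meanLog_timeShare]
  refine congrArg (· / (n : ℝ)) (Finset.sum_congr rfl fun t _ => ?_)
  have hn : (n : ℝ) ≠ 0 := Nat.cast_ne_zero.mpr (Fin.pos t).ne'
  rw [refInfo_probEq]
  refine meanLog_congr fun ω _ => ?_
  have hfst : probEq (timeShare n p) (fun z => (z.1, U z.1 z.2)) (t, U t ω) =
      probEq p (U t) (U t ω) / n :=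
    probEq_timeShare p fun i ω' => by
      simp only [Prod.mk.injEq]
      exact and_congr_right fun hi => by rw [hi]
  simp only [probEq_timeShare_pair, hfst]
  rw [div_mul_eq_mul_div, div_div_div_cancel_right₀ hn]

variable {Y : Type*} [Fintype Y]

theorem relEntropy_channelJoint_timeShare (p : Ω → ℝ) (U : Fin n → Ω → V) (A : Fin n → Ω → X)
    (B : Fin n → Ω → Y) (W : X → Y → ℝ) :
    relEntropy (probEq (timeShare n p) fun z => ((z.1, U z.1 z.2), A z.1 z.2, B z.1 z.2))
        (channelJoint (probEq (timeShare n p) fun z => ((z.1, U z.1 z.2), A z.1 z.2)) W) =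
      (∑ t, relEntropy (probEq p fun ω => (U t ω, A t ω, B t ω))
        (channelJoint (probEq p fun ω => (U t ω, A t ω)) W)) / n := by
  rw [relEntropy_probEq, meanLog_timeShare]
  refine congrArg (· / (n : ℝ)) (Finset.sum_congr rfl fun t _ => ?_)
  have hn : (n : ℝ) ≠ 0 := Nat.cast_ne_zero.mpr (Fin.pos t).ne'
  rw [relEntropy_probEq]
  refine meanLog_congr fun ω _ => ?_
  have htriple := probEq_timeShare_pair p U (fun t ω => (A t ω, B t ω)) t (U t ω) (A t ω, B t ω)
  simp only [channelJoint, htriple, probEq_timeShare_pair]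
  rw [div_mul_eq_mul_div, div_div_div_cancel_right₀ hn]

end TimeSharing

/-! ### Single-letterisation -/

section Past

variable {n : ℕ} {Γ Δ : Type*}

/-- The letters of `z` before time `t`, with `none` at all later times so that the type does not
depend on `t`. -/
def past (t : ℕ) (z : Fin n → Γ) : Fin n → Option Γ :=
  fun i => if (i : ℕ) < t then some (z i) else none

theorem past_eq_past_iff {t : ℕ} {z z' : Fin n → Γ} :
    past t z = past t z' ↔ ∀ i : Fin n, (i : ℕ) < t → z i = z' i := by
  simp only [funext_iff, past]
  refine forall_congr' fun i => ?_
  split_ifs with h <;> simp [h]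

theorem past_succ_eq_past_succ_iff {t : Fin n} {z z' : Fin n → Γ} :
    past ((t : ℕ) + 1) z = past ((t : ℕ) + 1) z' ↔ past t z = past t z' ∧ z t = z' t := by
  simp only [past_eq_past_iff, Nat.lt_succ_iff_lt_or_eq, or_imp, forall_and, Fin.val_inj,
    forall_eq]

theorem past_zero_eq_past_zero (z z' : Fin n → Γ) : past 0 z = past 0 z' :=
  past_eq_past_iff.mpr fun _ hi => absurd hi (Nat.not_lt_zero _)

theorem past_length_injective : Function.Injective (past n : (Fin n → Γ) → _) :=
  fun _ _ h => funext fun i => past_eq_past_iff.mp h i i.isLt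

theorem past_map (f : Γ → Δ) (t : ℕ) (z : Fin n → Γ) :
    past t (fun i => f (z i)) = fun i => (past t z i).map f := by
  funext i
  simp only [past]
  split_ifs <;> rfl

end Past

section ChainRule

variable {n : ℕ} {Ω M Γ : Type*} [Fintype Ω] [Fintype M] [Fintype Γ] {p : Ω → ℝ} {Q : Γ → ℝ}

theorem sum_refInfo_past (hp : ∀ ω, 0 ≤ p ω) (m : Ω → M) (Z : Ω → Fin n → Γ)
    (hQ : ∀ t, AbsCont p fun ω => Q (Z ω t)) :
    ∑ t : Fin n, refInfo (probEq p fun ω => ((m ω, past t (Z ω)), Z ω t)) Q =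
      refInfo (probEq p fun ω => (m ω, Z ω)) (iidLaw Q) := by
  set E : ℕ → ℝ := fun t =>
    meanLog p fun ω => probEq p (fun ω => (m ω, past t (Z ω))) (m ω, past t (Z ω))
  have hterm : ∀ t : Fin n, refInfo (probEq p fun ω => ((m ω, past t (Z ω)), Z ω t)) Q =
      E (t + 1) - E t - meanLog p fun ω => Q (Z ω t) := fun t => by
    rw [refInfo_probEq, meanLog_div (absCont_probEq_self hp _)
      fun ω hω => mul_ne_zero (probEq_ne_zero hp _ hω) (hQ t hω),
      meanLog_mul (absCont_probEq_self hp _) (hQ t), ← sub_sub]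
    congr 2
    refine meanLog_congr fun ω _ => probEq_congr p fun ω' => ?_
    simp only [Prod.mk.injEq, past_succ_eq_past_succ_iff, and_assoc]
  have hE0 : E 0 = meanLog p fun ω => probEq p m (m ω) :=
    meanLog_congr fun ω _ => probEq_congr p fun ω' => by
      simp only [Prod.mk.injEq, past_zero_eq_past_zero _ (Z ω), and_true]
  have hEn : E n = meanLog p fun ω => probEq p (fun ω => (m ω, Z ω)) (m ω, Z ω) :=
    meanLog_congr fun ω _ => probEq_congr p fun ω' => by
      simp only [Prod.mk.injEq, past_length_injective.eq_iff]
  have hiid : AbsCont p fun ω => iidLaw Q (Z ω) := fun ω hω =>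
    Finset.prod_ne_zero_iff.mpr fun t _ => hQ t hω
  calc ∑ t : Fin n, refInfo (probEq p fun ω => ((m ω, past t (Z ω)), Z ω t)) Q
      = ∑ t : Fin n, (E (t + 1) - E t) - ∑ t : Fin n, meanLog p fun ω => Q (Z ω t) := by
        rw [← Finset.sum_sub_distrib]
        exact Finset.sum_congr rfl fun t _ => hterm t
    _ = E n - E 0 - meanLog p fun ω => iidLaw Q (Z ω) := by
        rw [Fin.sum_univ_eq_sum_range (fun t => E (t + 1) - E t), Finset.sum_range_sub,
          ← meanLog_prod Finset.univ fun t _ => hQ t]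
        rfl
    _ = refInfo (probEq p fun ω => (m ω, Z ω)) (iidLaw Q) := by
        rw [hE0, hEn, refInfo_probEq, meanLog_div (absCont_probEq_self hp _)
          fun ω hω => mul_ne_zero (probEq_ne_zero hp _ hω) (hiid hω),
          meanLog_mul (absCont_probEq_self hp _) hiid, ← sub_sub]

theorem refInfo_timeShare_past (hp : ∀ ω, 0 ≤ p ω) (m : Ω → M) (Z : Ω → Fin n → Γ)
    (hQ : ∀ t, AbsCont p fun ω => Q (Z ω t)) :
    refInfo (probEq (timeShare n p) fun z => ((z.1, m z.2, past z.1 (Z z.2)), Z z.2 z.1)) Q =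
      refInfo (probEq p fun ω => (m ω, Z ω)) (iidLaw Q) / n := by
  rw [← sum_refInfo_past hp m Z hQ]
  exact refInfo_timeShare p (fun t ω => (m ω, past t (Z ω))) (fun t ω => Z ω t) Q

theorem neg_meanLog_probEq_le_log_card (hp : IsPMF p) (m : Ω → M) :
    -meanLog p (fun ω => probEq p m (m ω)) ≤ Real.log (Fintype.card M) := by
  rcases isEmpty_or_nonempty M with hM | hM
  · have : IsEmpty Ω := ⟨fun ω => hM.elim (m ω)⟩
    simp [meanLog]
  have hcard : (Fintype.card M : ℝ) ≠ 0 := Nat.cast_ne_zero.mpr Fintype.card_ne_zero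
  have hpm := isPMF_probEq hp m
  have huniform := relEntropy_nonneg (q := fun _ => (Fintype.card M : ℝ)⁻¹) hpm.1
    (fun _ => by positivity) (fun _ _ => inv_ne_zero hcard) (by simp [hpm.2, hcard])
  rw [relEntropy_eq_sub fun _ _ => inv_ne_zero hcard, meanLog_const, meanLog_probEq, hpm.2,
    Real.log_inv] at huniform
  linarith

theorem refInfo_le_add_log_card (hp : IsPMF p) (m : Ω → M) {Z : Ω → Γ} {B : ℝ}
    (h : ∀ z, probEq p Z z ≤ Real.exp B * Q z) :
    refInfo (probEq p fun ω => (m ω, Z ω)) Q ≤ B + Real.log (Fintype.card M) := by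
  have hm := absCont_probEq_self hp.1 m
  calc refInfo (probEq p fun ω => (m ω, Z ω)) Q
      ≤ meanLog p (fun ω => Real.exp B / probEq p m (m ω)) := by
        rw [refInfo_probEq]
        refine meanLog_le_meanLog hp.1 fun ω hω => ?_
        have hpair : 0 < probEq p (fun ω => (m ω, Z ω)) (m ω, Z ω) :=
          (probEq_nonneg hp.1 _ _).lt_of_ne' (probEq_ne_zero hp.1 _ hω)
        have hpos : 0 < probEq p m (m ω) := (probEq_nonneg hp.1 _ _).lt_of_ne' (hm hω)
        have hle : probEq p (fun ω => (m ω, Z ω)) (m ω, Z ω) ≤ Real.exp B * Q (Z ω) :=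
          (probEq_le_of_imp hp.1 fun _ h => (Prod.mk.inj h).2).trans (h _)
        have hQ : 0 < Q (Z ω) := pos_of_mul_pos_right (hpair.trans_le hle) (Real.exp_pos B).le
        refine ⟨div_pos hpair (mul_pos hpos hQ), ?_⟩
        rw [div_le_div_iff₀ (mul_pos hpos hQ) hpos]
        nlinarith
    _ = B - meanLog p (fun ω => probEq p m (m ω)) := by
        rw [meanLog_div (fun _ _ => (Real.exp_pos B).ne') hm, meanLog_const, hp.2, one_mul,
          Real.log_exp]
    _ ≤ B + Real.log (Fintype.card M) := by linarith [neg_meanLog_probEq_le_log_card hp m]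

end ChainRule

section DominatedByIid

variable {n : ℕ} {M Γ Γ' Δ : Type*} [Fintype M] [Fintype Γ] {P : Γ → ℝ}
  {p : (Fin n → Γ) → ℝ} {B : ℝ}

theorem absCont_probEq_letter (hP : ∀ x, 0 ≤ P x) (hpP : AbsCont p (iidLaw P)) (f : Γ → Δ)
    (t : Fin n) : AbsCont p fun ω => probEq P f (f (ω t)) :=
  fun _ hω => probEq_ne_zero hP f (ne_zero_of_iidLaw_ne_zero (hpP hω) t)

theorem probEq_ne_zero_of_timeShare {V : Type*} (hP : ∀ x, 0 ≤ P x) (hpP : AbsCont p (iidLaw P))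
    {U : Fin n × (Fin n → Γ) → V} {f : Γ → Δ} {v : V} {x : Δ}
    (h : probEq (timeShare n p) (fun z => (U z, f (z.2 z.1))) (v, x) ≠ 0) : probEq P f x ≠ 0 := by
  obtain ⟨z, hz, heq⟩ := exists_of_probEq_ne_zero h
  rw [← (Prod.mk.inj heq).2]
  exact absCont_probEq_letter hP hpP f z.1 (left_ne_zero_of_mul hz)

variable [Fintype Γ'] [Fintype Δ]

theorem refInfo_timeShare_past_le (hP : ∀ x, 0 ≤ P x) (hp : IsPMF p)
    (hpB : ∀ ω, p ω ≤ Real.exp B * iidLaw P ω) (m : (Fin n → Γ) → M) (f : Γ → Δ) :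
    refInfo (probEq (timeShare n p) fun z =>
      ((z.1, m z.2, past z.1 fun i => f (z.2 i)), f (z.2 z.1))) (probEq P f) ≤
      (B + Real.log (Fintype.card M)) / n := by
  rw [refInfo_timeShare_past hp.1 m (fun ω i => f (ω i))
    (absCont_probEq_letter hP (.of_le_mul hp.1 hpB) f), ← probEq_iidLaw]
  exact div_le_div_of_nonneg_right (refInfo_le_add_log_card hp m (probEq_le_mul hpB _))
    n.cast_nonneg

theorem relEntropy_timeShare_le (hn : 0 < n) (hP : ∀ x, 0 ≤ P x) (hp : IsPMF p)
    (hpB : ∀ ω, p ω ≤ Real.exp B * iidLaw P ω) (f : Γ → Δ) :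
    relEntropy (probEq (timeShare n p) fun z => f (z.2 z.1)) (probEq P f) ≤ B / n := by
  set s := probEq (timeShare n p) fun z =>
    ((z.1, (), past z.1 fun i => f (z.2 i)), f (z.2 z.1))
  have hsnd : probEq s Prod.snd = probEq (timeShare n p) fun z => f (z.2 z.1) :=
    probEq_probEq _ _ _
  have hle := relEntropy_snd_le_refInfo (s := s) (isPMF_probEq (isPMF_timeShare hn hp) _)
    (probEq_nonneg hP f) fun v x h => probEq_ne_zero_of_timeShare hP (.of_le_mul hp.1 hpB) h
  rw [hsnd] at hle
  simpa using hle.trans (refInfo_timeShare_past_le hP hp hpB (fun _ => ()) f)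

theorem refInfo_div_le_refInfo_timeShare_past (hP : ∀ x, 0 ≤ P x) (hp : ∀ ω, 0 ≤ p ω)
    (hpP : AbsCont p (iidLaw P)) (m : (Fin n → Γ) → M) (f : Γ → Γ') (g : Γ' → Δ) :
    refInfo (probEq p fun ω => (m ω, fun i => g (f (ω i))))
        (iidLaw (probEq P fun x => g (f x))) / n ≤
      refInfo (probEq (timeShare n p) fun z =>
          ((z.1, m z.2, past z.1 fun i => f (z.2 i)), g (f (z.2 z.1))))
        (probEq P fun x => g (f x)) := by
  rw [← refInfo_timeShare_past hp m (fun ω i => g (f (ω i)))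
    (absCont_probEq_letter hP hpP fun x => g (f x))]
  have hle := refInfo_map_fst_le
    (s := probEq (timeShare n p) fun z =>
      ((z.1, m z.2, past z.1 fun i => f (z.2 i)), g (f (z.2 z.1))))
    (probEq_nonneg (fun z => div_nonneg (hp _) n.cast_nonneg) _) (probEq_nonneg hP fun x => g (f x))
    (fun v x h => probEq_ne_zero_of_timeShare (f := fun x => g (f x)) hP hpP h)
    fun v => (v.1, v.2.1, fun i => (v.2.2 i).map g)
  rw [probEq_probEq] at hle
  simpa only [← past_map g] using hle

end DominatedByIid

section MemorylessChannel

variable {n : ℕ} {C X Y M V : Type*}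

/-- The auxiliary variable of the single-letterisation: the message together with the inputs and
outputs of the channel before time `t`. -/
def auxVar (m : (Fin n → C) → M) (t : ℕ) (ω : Fin n → C × X × Y) :
    M × (Fin n → Option (X × Y)) :=
  (m fun i => (ω i).1, past t fun i => (ω i).2)

theorem auxVar_update (m : (Fin n → C) → M) (t : Fin n) (ω : Fin n → C × X × Y) (z : X × Y) :
    auxVar m t (Function.update ω t ((ω t).1, z)) = auxVar m t ω := by
  refine Prod.ext (congrArg m (funext fun i => ?_)) (past_eq_past_iff.mpr fun i hi => ?_)
  · rcases eq_or_ne i t with rfl | hit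
    · rw [Function.update_self]
    · rw [Function.update_of_ne hit]
  · rw [Function.update_of_ne fun h => hi.ne (congrArg Fin.val h)]

variable [Fintype C] [Fintype X] [Fintype Y] {s : C × X → ℝ} {W : X → Y → ℝ}

theorem probEq_iidLaw_channelJoint (s : C × X → ℝ) (hW : ∀ x, IsPMF (W x)) (t : Fin n)
    {U : (Fin n → C × X × Y) → V}
    (hU : ∀ ω y, U (Function.update ω t ((ω t).1, (ω t).2.1, y)) = U ω) :
    probEq (iidLaw (channelJoint s W)) (fun ω => (U ω, (ω t).2)) =
      channelJoint (probEq (iidLaw (channelJoint s W)) fun ω => (U ω, (ω t).2.1)) W := by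
  have hfactor : (iidLaw (channelJoint s W) : (Fin n → C × X × Y) → ℝ) =
      fun ω => s ((ω t).1, (ω t).2.1) * (∏ i ∈ Finset.univ.erase t, channelJoint s W (ω i)) *
        W (U ω, (ω t).2.1).2 (ω t).2.2 := by
    funext ω
    rw [iidLaw, ← Finset.mul_prod_erase _ _ (Finset.mem_univ t), channelJoint]
    ring
  funext ⟨u, x, y⟩
  have hpair := (isReplaceable_update_snd_snd t).probEq_pair
    (S := fun ω : Fin n → C × X × Y => (U ω, (ω t).2.1))
    (r := fun ω => s ((ω t).1, (ω t).2.1) * ∏ i ∈ Finset.univ.erase t, channelJoint s W (ω i))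
    (fun ω y => by simp [hU]) (fun ω y => ?_) (W := fun z => W z.2) (fun z => (hW z.2).2) (u, x) y
  · rw [← hfactor] at hpair
    rw [channelJoint, ← hpair]
    exact probEq_congr _ fun ω => by simp only [Prod.ext_iff, and_assoc]
  · simp only [Function.update_self]
    congr 1
    refine Finset.prod_congr rfl fun i hi => ?_
    rw [Function.update_of_ne (Finset.ne_of_mem_erase hi)]

theorem relEntropy_channelJoint_le_sub {Ω : Type*} [Fintype Ω] [Fintype V] {p q : Ω → ℝ}
    (hp : ∀ ω, 0 ≤ p ω) (hq : ∀ ω, 0 ≤ q ω) (hpq : AbsCont p q) (U : Ω → V) (Z : Ω → X × Y)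
    (hjoint : probEq q (fun ω => (U ω, Z ω)) = channelJoint (probEq q fun ω => (U ω, (Z ω).1)) W) :
    relEntropy (probEq p fun ω => (U ω, Z ω))
        (channelJoint (probEq p fun ω => (U ω, (Z ω).1)) W) ≤
      relEntropy (probEq p fun ω => (U ω, Z ω)) (probEq q fun ω => (U ω, Z ω)) -
        relEntropy (probEq p U) (probEq q U) := by
  have hchain := relEntropy_channelJoint_input_add (r := probEq q fun ω => (U ω, (Z ω).1))
    (W := W) (probEq_nonneg hp fun ω => (U ω, Z ω)) (by rw [← hjoint]; exact hpq.law hq _)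
  have hinput : probEq (probEq p fun ω => (U ω, Z ω)) (fun z => (z.1, z.2.1)) =
      probEq p fun ω => (U ω, (Z ω).1) := probEq_probEq _ _ _
  have hdrop : relEntropy (probEq p U) (probEq q U) ≤
      relEntropy (probEq p fun ω => (U ω, (Z ω).1)) (probEq q fun ω => (U ω, (Z ω).1)) :=
    relEntropy_probEq_le_of_factorsThrough hp hq hpq fun _ _ h => (Prod.mk.inj h).1
  rw [hinput, ← hjoint] at hchain
  linarith

variable [Fintype M] {p : (Fin n → C × X × Y) → ℝ} {B : ℝ}

theorem sum_relEntropy_channelJoint_auxVar_le (hs : IsPMF s) (hW : ∀ x, IsPMF (W x))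
    (hp : IsPMF p) (hpB : ∀ ω, p ω ≤ Real.exp B * iidLaw (channelJoint s W) ω)
    (m : (Fin n → C) → M) :
    ∑ t : Fin n, relEntropy (probEq p fun ω => (auxVar m t ω, (ω t).2))
      (channelJoint (probEq p fun ω => (auxVar m t ω, (ω t).2.1)) W) ≤ B := by
  set q : (Fin n → C × X × Y) → ℝ := iidLaw (channelJoint s W)
  have hq : IsPMF q := isPMF_iidLaw (isPMF_channelJoint hs hW)
  have hpq : AbsCont p q := .of_le_mul hp.1 hpB
  set D : ℕ → ℝ := fun t => relEntropy (probEq p (auxVar m t)) (probEq q (auxVar m t))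
  have hterm (t : Fin n) : relEntropy (probEq p fun ω => (auxVar m t ω, (ω t).2))
      (channelJoint (probEq p fun ω => (auxVar m t ω, (ω t).2.1)) W) ≤ D (t + 1) - D t := by
    have hnext : relEntropy (probEq p fun ω => (auxVar m t ω, (ω t).2))
        (probEq q fun ω => (auxVar m t ω, (ω t).2)) ≤ D (t + 1) :=
      relEntropy_probEq_le_of_factorsThrough hp.1 hq.1 hpq fun ω ω' h => by
        simpa only [auxVar, Prod.mk.injEq, past_succ_eq_past_succ_iff, and_assoc] using h
    exact (relEntropy_channelJoint_le_sub hp.1 hq.1 hpq (auxVar m t) _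
      (probEq_iidLaw_channelJoint s hW t fun ω y => auxVar_update m t ω _)).trans
      (sub_le_sub_right hnext _)
  have hD0 : 0 ≤ D 0 := relEntropy_nonneg (probEq_nonneg hp.1 _) (probEq_nonneg hq.1 _)
    (hpq.law hq.1 _) (by rw [sum_probEq, sum_probEq, hp.2, hq.2])
  have hDn : D n ≤ B :=
    (relEntropy_probEq_le hp.1 hq.1 hpq _).trans (relEntropy_le_of_le_exp_mul hp hpB)
  calc _ ≤ ∑ t : Fin n, (D (t + 1) - D t) := Finset.sum_le_sum fun t _ => hterm t
    _ = D n - D 0 := by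
      rw [Fin.sum_univ_eq_sum_range (fun t => D (t + 1) - D t), Finset.sum_range_sub]
    _ ≤ B := by linarith

theorem probEq_channelJoint_snd (s : C × X → ℝ) (W : X → Y → ℝ) :
    probEq (channelJoint s W) Prod.snd = fun z => probEq s Prod.snd z.1 * W z.1 z.2 := by
  funext z
  rw [probEq_snd, probEq_snd, Finset.sum_mul]
  rfl

theorem probEq_channelJoint_snd_snd (s : C × X → ℝ) (W : X → Y → ℝ) :
    probEq (channelJoint s W) (fun z => z.2.2) = outputLaw (probEq s Prod.snd) W := by
  funext y
  rw [← probEq_probEq _ Prod.snd Prod.snd, probEq_channelJoint_snd, probEq_snd]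
  rfl

theorem IsBottleneckBound.exists_refInfo_le (hs : IsPMF s) (hW : ∀ x, IsPMF (W x)) {L H : ℝ}
    (h : IsBottleneckBound (probEq s Prod.snd) W L H) (hL : 0 ≤ L) {ε : ℝ} (hε : 0 < ε) :
    ∃ δ > 0, ∀ {n : ℕ}, 0 < n → ∀ {M : Type*} [Fintype M] {p : (Fin n → C × X × Y) → ℝ} {B : ℝ},
      IsPMF p → (∀ ω, p ω ≤ Real.exp B * iidLaw (channelJoint s W) ω) → B ≤ n * δ →
      ∀ m : (Fin n → C) → M, Real.log (Fintype.card M) ≤ n * L →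
      refInfo (probEq p fun ω => (m fun i => (ω i).1, fun i => (ω i).2.2))
        (iidLaw (outputLaw (probEq s Prod.snd) W)) ≤ n * (H + ε) := by
  obtain ⟨δ, hδ, hstable⟩ := h.exists_stable (isPMF_probEq hs _) hW hL hε
  refine ⟨δ, hδ, fun {n} hn {M} _ {p} {B} hp hpB hB m hm => ?_⟩
  have hn' : (0 : ℝ) < n := Nat.cast_pos.mpr hn
  have hq := (isPMF_channelJoint hs hW).1
  have hpq : AbsCont p (iidLaw (channelJoint s W)) := .of_le_mul hp.1 hpB
  have hinput : probEq (channelJoint s W) (fun z => z.2.1) = probEq s Prod.snd := by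
    conv_rhs => rw [← probEq_channelJoint_input s hW, probEq_probEq]
  have hbound := hstable
    (s := probEq (timeShare n p) fun z => ((z.1, auxVar m z.1 z.2), (z.2 z.1).2))
    (isPMF_probEq (isPMF_timeShare hn hp) _) (fun v x y hvxy => ?_) ?_ ?_ ?_
  · have hsingle := refInfo_div_le_refInfo_timeShare_past hq hp.1 hpq
      (fun ω => m fun i => (ω i).1) Prod.snd Prod.snd
    rw [probEq_probEq] at hbound
    rw [probEq_channelJoint_snd_snd] at hsingle
    rw [← div_le_iff₀' hn']
    exact hsingle.trans hbound
  · have := probEq_ne_zero_of_timeShare hq hpq (f := Prod.snd) hvxy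
    rwa [probEq_channelJoint_snd] at this
  · have := refInfo_timeShare_past_le hq hp hpB (fun ω => m fun i => (ω i).1) Prod.snd
    rw [probEq_channelJoint_snd] at this
    refine this.trans ?_
    rw [div_le_iff₀' hn']
    linarith
  · rw [probEq_probEq]
    have := relEntropy_channelJoint_timeShare p (fun t => auxVar m t) (fun t ω => (ω t).2.1)
      (fun t ω => (ω t).2.2) W
    refine this.trans_le ?_
    rw [div_le_iff₀' hn']
    exact (sum_relEntropy_channelJoint_auxVar_le hs hW hp hpB m).trans hB
  · rw [probEq_probEq]
    have := relEntropy_timeShare_le hn hq hp hpB fun z => z.2.1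
    rw [hinput] at this
    exact this.trans ((div_le_iff₀' hn').mpr hB)

end MemorylessChannel

/-! ### Conditional kernels -/

section CondKernel

variable {V X Y : Type*} [Fintype X] [Fintype Y] {r : X × Y → ℝ}

open Classical in
/-- The conditional law of the second component of `r` given the first one. For values of the
first component of weight `0` it is the marginal of the second component, so that it is always a
law that vanishes wherever that marginal does. -/
def condKernel (r : X × Y → ℝ) (x : X) (y : Y) : ℝ :=
  if probEq r Prod.fst x = 0 then probEq r Prod.snd y else r (x, y) / probEq r Prod.fst x

theorem isPMF_condKernel (hr : IsPMF r) (x : X) : IsPMF (condKernel r x) := by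
  refine ⟨fun y => ?_, ?_⟩
  · unfold condKernel
    split_ifs
    · exact probEq_nonneg hr.1 _ _
    · exact div_nonneg (hr.1 _) (probEq_nonneg hr.1 _ _)
  · unfold condKernel
    split_ifs with hx
    · rw [sum_probEq, hr.2]
    · rw [← Finset.sum_div, ← probEq_fst, div_self hx]

theorem probEq_fst_mul_condKernel (hr : ∀ z, 0 ≤ r z) (x : X) (y : Y) :
    probEq r Prod.fst x * condKernel r x y = r (x, y) := by
  unfold condKernel
  split_ifs with hx
  · by_contra hne
    exact probEq_ne_zero hr Prod.fst (fun h => hne (by rw [hx, zero_mul, h])) hx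
  · exact mul_div_cancel₀ _ hx

theorem condKernel_eq_zero (hr : ∀ z, 0 ≤ r z) (x : X) {y : Y} (hy : probEq r Prod.snd y = 0) :
    condKernel r x y = 0 := by
  have hxy : r (x, y) = 0 := by
    by_contra hne
    exact probEq_ne_zero hr Prod.snd hne hy
  unfold condKernel
  split_ifs
  · exact hy
  · rw [hxy, zero_div]

theorem outputLaw_condKernel (hr : ∀ z, 0 ≤ r z) :
    outputLaw (probEq r Prod.fst) (condKernel r) = probEq r Prod.snd := by
  funext y
  simp only [outputLaw, probEq_fst_mul_condKernel hr, probEq_snd]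

variable [Fintype V] {s : V × X → ℝ} {W : X → Y → ℝ}

theorem miOf_channelJoint_input (hs : ∀ z, 0 ≤ s z) (hW : ∀ x, IsPMF (W x)) :
    miOf (channelJoint s W) Prod.fst (fun z => z.2.1) * Real.log 2 =
      refInfo s (probEq s Prod.snd) := by
  rw [miOf_mul_log_two (channelJoint_nonneg hs fun x => (hW x).1), probEq_channelJoint_input s hW]
  conv_rhs => rw [← probEq_channelJoint_input s hW, probEq_probEq, probEq_channelJoint_input s hW]

theorem miOf_channelJoint_output (hs : ∀ z, 0 ≤ s z) (hW : ∀ x, IsPMF (W x)) :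
    miOf (channelJoint s W) Prod.fst (fun z => z.2.2) * Real.log 2 =
      refInfo (channelPush s W) (outputLaw (probEq s Prod.snd) W) := by
  rw [miOf_mul_log_two (channelJoint_nonneg hs fun x => (hW x).1), probEq_channelJoint_output,
    probEq_channelJoint_snd_snd]

end CondKernel

/-! ### Markov chains -/

section Markov

variable {K : ℕ} {Y : ℕ → Type}

variable (Y) in
/-- The letter at the input of hop `j`. -/
def coordLo (j : Fin K) (y : ∀ i : Fin (K + 1), Y i) : Y (j : ℕ) := y (idxLo K j)

variable (Y) in
/-- The letter at the output of hop `j`. -/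
def coordHi (j : Fin K) (y : ∀ i : Fin (K + 1), Y i) : Y ((j : ℕ) + 1) := y (idxHi K j)

theorem isReplaceable_coordHi (j : Fin K) :
    IsReplaceable (coordHi Y j) fun y b =>
      Function.update (β := fun i : Fin (K + 1) => Y i) y (idxHi K j) b :=
  isReplaceable_update (A := fun i : Fin (K + 1) => Y i) (idxHi K j)

theorem dependsOn_coordLo (j : Fin K) : DependsOn (coordLo Y j) {i | (i : ℕ) ≤ j} :=
  fun _ _ h => h (idxLo K j) (le_refl (j : ℕ))

theorem dependsOn_coordHi (j : Fin K) : DependsOn (coordHi Y j) {i | (i : ℕ) ≤ j + 1} :=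
  fun _ _ h => h (idxHi K j) (le_refl (j + 1 : ℕ))

variable {σ : Type*} {S : (∀ i : Fin (K + 1), Y i) → σ}

theorem dependsOn_prodMk_coordLo {j : Fin K} (hS : DependsOn S {i | (i : ℕ) ≤ j}) :
    DependsOn (fun y => (S y, coordLo Y j y)) {i | (i : ℕ) ≤ j} :=
  fun _ _ h => Prod.ext (hS h) (dependsOn_coordLo j h)

theorem update_idxHi_of_ne {i : Fin (K + 1)} {j : Fin K} (h : (i : ℕ) ≠ j + 1)
    (y : ∀ i : Fin (K + 1), Y i) (b : Y ((j : ℕ) + 1)) :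
    Function.update (β := fun i : Fin (K + 1) => Y i) y (idxHi K j) b i = y i :=
  have hij : i ≠ idxHi K j := fun hij => h (congrArg Fin.val hij)
  Function.update_of_ne (β := fun i : Fin (K + 1) => Y i) hij b y

theorem update_idxHi_of_dependsOn {j : Fin K} (hS : DependsOn S {i | (i : ℕ) ≤ j})
    (y : ∀ i : Fin (K + 1), Y i) (b : Y ((j : ℕ) + 1)) :
    S (Function.update (β := fun i : Fin (K + 1) => Y i) y (idxHi K j) b) = S y :=
  hS fun _ hi => update_idxHi_of_ne (Nat.lt_succ_of_le hi).ne y b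

section ChainLaw

variable {μ : Y ((0 : Fin (K + 1)) : ℕ) → ℝ} {W W' : ∀ j : Fin K, Y (j : ℕ) → Y ((j : ℕ) + 1) → ℝ}

/-- The law of the Markov chain with initial law `μ` and transition kernels `W j`. -/
def chainLaw (μ : Y ((0 : Fin (K + 1)) : ℕ) → ℝ)
    (W : ∀ j : Fin K, Y (j : ℕ) → Y ((j : ℕ) + 1) → ℝ) (y : ∀ i : Fin (K + 1), Y i) : ℝ :=
  μ (y 0) * ∏ j, W j (coordLo Y j y) (coordHi Y j y)

/-- The factors of `chainLaw` other than the one of hop `j`. -/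
def chainRest (μ : Y ((0 : Fin (K + 1)) : ℕ) → ℝ)
    (W : ∀ j : Fin K, Y (j : ℕ) → Y ((j : ℕ) + 1) → ℝ) (j : Fin K)
    (y : ∀ i : Fin (K + 1), Y i) : ℝ :=
  μ (y 0) * ∏ l ∈ Finset.univ.erase j, W l (coordLo Y l y) (coordHi Y l y)

theorem chainLaw_eq_chainRest_mul (j : Fin K) :
    chainLaw μ W = fun y => chainRest μ W j y * W j (coordLo Y j y) (coordHi Y j y) := by
  funext y
  rw [chainLaw, chainRest, mul_assoc, Finset.prod_erase_mul _ _ (Finset.mem_univ j)]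

theorem chainRest_congr {j : Fin K} (h : ∀ l, l ≠ j → W l = W' l) :
    chainRest μ W j = chainRest μ W' j := by
  funext y
  exact congrArg _ (Finset.prod_congr rfl fun l hl => by rw [h l (Finset.ne_of_mem_erase hl)])

theorem chainRest_update {j : Fin K} (h : ∀ l, j < l → ∀ a a', W l a = W l a')
    (y : ∀ i : Fin (K + 1), Y i) (b : Y ((j : ℕ) + 1)) :
    chainRest μ W j (Function.update (β := fun i : Fin (K + 1) => Y i) y (idxHi K j) b) =
      chainRest μ W j y := by
  unfold chainRest
  rw [update_idxHi_of_ne (Nat.succ_ne_zero j).symm]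
  refine congrArg _ (Finset.prod_congr rfl fun l hl => ?_)
  have hlj : (l : ℕ) ≠ j := Fin.val_ne_of_ne (Finset.ne_of_mem_erase hl)
  unfold coordLo coordHi
  rw [update_idxHi_of_ne (i := idxHi K l) (Nat.succ_ne_succ_iff.mpr hlj)]
  rcases lt_or_gt_of_ne hlj with hlt | hlt
  · rw [update_idxHi_of_ne (i := idxLo K l) (Nat.lt_succ_of_lt hlt).ne]
  · exact congrFun (h l hlt _ _) _

/-- The kernels `W`, with the input of every hop from `k` on frozen to an arbitrary letter. -/
def freezeFrom [∀ i, Nonempty (Y i)] (W : ∀ j : Fin K, Y (j : ℕ) → Y ((j : ℕ) + 1) → ℝ) (k : ℕ)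
    (j : Fin K) (a : Y (j : ℕ)) : Y ((j : ℕ) + 1) → ℝ :=
  W j (if (j : ℕ) < k then a else Classical.arbitrary _)

variable [∀ i, Fintype (Y i)] [∀ i, Nonempty (Y i)]

theorem probEq_chainLaw_congr (hW : ∀ j a, ∑ b, W j a b = 1) (hW' : ∀ j a, ∑ b, W' j a b = 1)
    {j : Fin K} (hWW' : ∀ l, l ≠ j → W l = W' l) (hconst : ∀ l, j < l → ∀ a a', W l a = W l a')
    (hS : DependsOn S {i | (i : ℕ) ≤ j}) :
    probEq (chainLaw μ W) S = probEq (chainLaw μ W') S := by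
  have hT := dependsOn_prodMk_coordLo hS
  have hpair := (isReplaceable_coordHi j).probEq_eq_probEq
    (update_idxHi_of_dependsOn hT) (chainRest_update (μ := μ) hconst)
    (W := fun s : σ × _ => W j s.2) (W' := fun s => W' j s.2)
    (fun s => hW j s.2) (fun s => hW' j s.2)
  rw [chainLaw_eq_chainRest_mul j, chainLaw_eq_chainRest_mul j, ← chainRest_congr hWW']
  funext s
  rw [← sum_probEq_prod _ S (coordLo Y j), ← sum_probEq_prod _ S (coordLo Y j), hpair]

theorem probEq_chainLaw_freezeFrom (hW : ∀ j a, ∑ b, W j a b = 1) {k : ℕ} (hk : k ≤ K)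
    (hS : DependsOn S {i | (i : ℕ) ≤ k}) :
    probEq (chainLaw μ (freezeFrom W k)) S = probEq (chainLaw μ W) S := by
  induction hk using Nat.decreasingInduction with
  | self =>
    congr 2
    funext j a
    rw [freezeFrom, if_pos j.isLt]
  | of_succ k hk ih =>
    rw [← ih (hS.mono fun i hi => Nat.le_succ_of_le hi)]
    refine probEq_chainLaw_congr (fun j a => hW j _) (fun j a => hW j _) (j := ⟨k, hk⟩)
      (fun l hl => ?_) (fun l hl a a' => ?_) hS
    · have hl' : (l : ℕ) ≠ k := Fin.val_ne_of_ne hl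
      funext a
      simp only [freezeFrom, Nat.lt_succ_iff_lt_or_eq, hl', or_false]
    · have hl' : ¬ (l : ℕ) < k := not_lt_of_gt hl
      simp only [freezeFrom, if_neg hl']

theorem probEq_chainLaw_hop (hW : ∀ j a, ∑ b, W j a b = 1) (j : Fin K)
    (hS : DependsOn S {i | (i : ℕ) ≤ j}) :
    probEq (chainLaw μ W) (fun y => (S y, coordLo Y j y, coordHi Y j y)) =
      channelJoint (probEq (chainLaw μ W) fun y => (S y, coordLo Y j y)) (W j) := by
  have hT := dependsOn_prodMk_coordLo hS
  have hle : {i : Fin (K + 1) | (i : ℕ) ≤ j} ⊆ {i | (i : ℕ) ≤ j + 1} :=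
    fun i hi => Nat.le_succ_of_le hi
  have hT' : DependsOn (fun y => (S y, coordLo Y j y, coordHi Y j y)) {i | (i : ℕ) ≤ j + 1} :=
    fun y z hyz => Prod.ext (hS.mono hle hyz)
      (Prod.ext ((dependsOn_coordLo j).mono hle hyz) (dependsOn_coordHi j hyz))
  have hWj : freezeFrom W (j + 1) j = W j := by
    funext a
    rw [freezeFrom, if_pos (Nat.lt_succ_self _)]
  have hconst : ∀ l, j < l → ∀ a a', freezeFrom W (j + 1) l a = freezeFrom W (j + 1) l a' :=
    fun l hl a a' => by
      have hl' : ¬ (l : ℕ) < j + 1 := not_lt_of_ge hl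
      simp only [freezeFrom, if_neg hl']
  rw [← probEq_chainLaw_freezeFrom hW j.isLt hT',
    ← probEq_chainLaw_freezeFrom hW j.isLt (hT.mono hle), chainLaw_eq_chainRest_mul j, hWj]
  funext z
  have hpair := (isReplaceable_coordHi j).probEq_pair
    (update_idxHi_of_dependsOn hT) (chainRest_update (μ := μ) hconst)
    (W := fun s => W j s.2) (fun s => hW j s.2) (z.1, z.2.1) z.2.2
  rw [channelJoint, ← hpair]
  exact probEq_congr _ fun y => by simp [Prod.ext_iff, and_assoc]

end ChainLaw

variable [∀ i, Fintype (Y i)] {P : (∀ i : Fin (K + 1), Y i) → ℝ}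

/-- The joint law of the input and the output letter of hop `j`. -/
def hopLaw (P : (∀ i : Fin (K + 1), Y i) → ℝ) (j : Fin K) : Y (j : ℕ) × Y ((j : ℕ) + 1) → ℝ :=
  probEq P fun y => (coordLo Y j y, coordHi Y j y)

/-- The transition kernel of hop `j`. -/
def hopKernel (P : (∀ i : Fin (K + 1), Y i) → ℝ) (j : Fin K) : Y (j : ℕ) → Y ((j : ℕ) + 1) → ℝ :=
  condKernel (hopLaw P j)

theorem pairMargK_eq_hopLaw (j : Fin K) (a : Y (j : ℕ)) (b : Y ((j : ℕ) + 1)) :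
    pairMargK K Y P j a b = hopLaw P j (a, b) := by
  exact Finset.sum_congr rfl fun y _ => by congr! 1; exact Prod.mk_inj.symm

theorem probEq_hopLaw_fst (j : Fin K) : probEq (hopLaw P j) Prod.fst = probEq P (coordLo Y j) :=
  probEq_probEq _ _ _

theorem pairMargK_eq_mul_hopKernel (hP : ∀ y, 0 ≤ P y) (j : Fin K) (a : Y (j : ℕ))
    (b : Y ((j : ℕ) + 1)) :
    pairMargK K Y P j a b = probEq P (coordLo Y j) a * hopKernel P j a b := by
  rw [pairMargK_eq_hopLaw, ← probEq_hopLaw_fst]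
  exact (probEq_fst_mul_condKernel (probEq_nonneg hP _) a b).symm

theorem probEq_hopLaw_snd (j : Fin K) : probEq (hopLaw P j) Prod.snd = probEq P (coordHi Y j) :=
  probEq_probEq _ _ _

theorem isPMF_hopKernel (hP : IsPMF P) (j : Fin K) (a : Y (j : ℕ)) : IsPMF (hopKernel P j a) :=
  isPMF_condKernel (isPMF_probEq hP _) a

theorem outputLaw_hopKernel (hP : ∀ y, 0 ≤ P y) (j : Fin K) :
    outputLaw (probEq P (coordLo Y j)) (hopKernel P j) = probEq P (coordHi Y j) := by
  rw [← probEq_hopLaw_fst, ← probEq_hopLaw_snd]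
  exact outputLaw_condKernel (probEq_nonneg hP _)

theorem prod_idxLo_eq (hK : 0 < K) (f : Fin (K + 1) → ℝ) :
    ∏ j, f (idxLo K j) =
      f 0 * ∏ i ∈ Finset.univ.filter (fun i : Fin (K + 1) => 0 < (i : ℕ) ∧ (i : ℕ) < K), f i := by
  obtain ⟨k, rfl⟩ : ∃ k, K = k + 1 := Nat.exists_eq_succ_of_ne_zero hK.ne'
  have hidx : ∀ j, idxLo (k + 1) j = j.castSucc := fun _ => rfl
  rw [Finset.prod_filter, Fin.prod_univ_castSucc (n := k + 1)]
  simp [hidx, Fin.prod_univ_succ]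

theorem IsMarkovChainK.eq_chainLaw (hP : ∀ y, 0 ≤ P y) (hK : 0 < K)
    (hM : IsMarkovChainK K Y P) : P = chainLaw (margK K Y P 0) (hopKernel P) := by
  funext y
  by_cases hzero : ∃ i, margK K Y P i (y i) = 0
  · obtain ⟨i, hi⟩ := hzero
    have hPy : P y = 0 := by
      by_contra hne
      exact probEq_ne_zero hP (fun y => y i) hne hi
    rw [hPy, chainLaw]
    cases i using Fin.cases with
    | zero => rw [hi, zero_mul]
    | succ l =>
      have hkernel : hopKernel P l (coordLo Y l y) (coordHi Y l y) = 0 :=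
        condKernel_eq_zero (probEq_nonneg hP _) _ ((congrFun (probEq_hopLaw_snd l) _).trans hi)
      rw [Finset.prod_eq_zero (Finset.mem_univ l) hkernel, mul_zero]
  · have hne : ∀ i, margK K Y P i (y i) ≠ 0 := fun i hi => hzero ⟨i, hi⟩
    have hhop : ∀ j, pairMargK K Y P j (y (idxLo K j)) (y (idxHi K j)) =
        margK K Y P (idxLo K j) (y (idxLo K j)) *
          hopKernel P j (coordLo Y j y) (coordHi Y j y) :=
      fun j => pairMargK_eq_mul_hopKernel hP j (y (idxLo K j)) (y (idxHi K j))
    refine mul_right_cancel₀ (Finset.prod_ne_zero_iff.mpr fun i _ => hne i) ((hM y).trans ?_)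
    rw [Finset.prod_congr rfl fun j _ => hhop j, Finset.prod_mul_distrib,
      prod_idxLo_eq hK fun i => margK K Y P i (y i), chainLaw]
    ring

theorem IsMarkovChainK.probEq_hop [∀ i, Nonempty (Y i)] (hP : IsPMF P)
    (hM : IsMarkovChainK K Y P) (j : Fin K) (hS : DependsOn S {i | (i : ℕ) ≤ j}) :
    probEq P (fun y => (S y, coordLo Y j y, coordHi Y j y)) =
      channelJoint (probEq P fun y => (S y, coordLo Y j y)) (hopKernel P j) := by
  have hchain := hM.eq_chainLaw hP.1 (Nat.zero_lt_of_lt j.isLt)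
  have hhop := probEq_chainLaw_hop (μ := margK K Y P 0) (fun l a => (isPMF_hopKernel hP l a).2) j hS
  rwa [← hchain] at hhop

section Eta

variable {j : Fin K} {R r : ℝ}

theorem mul_pairMargK_eq_channelJoint {m : ℕ} {PU : Y (j : ℕ) → Fin m → ℝ}
    {s : Fin m × Y (j : ℕ) → ℝ} (hP : ∀ y, 0 ≤ P y)
    (hs : ∀ z, PU z.2 z.1 * probEq P (coordLo Y j) z.2 = s z) :
    (fun q : Fin m × Y (j : ℕ) × Y ((j : ℕ) + 1) =>
      PU q.2.1 q.1 * pairMargK K Y P j q.2.1 q.2.2) = channelJoint s (hopKernel P j) := by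
  funext q
  rw [pairMargK_eq_mul_hopKernel hP, ← mul_assoc, hs (q.1, q.2.1), channelJoint]

theorem exists_refInfo_of_mem_etaSetK (hP : IsPMF P) (hr : r ∈ etaSetK K Y P j R) :
    ∃ (m : ℕ) (s : Fin m × Y (j : ℕ) → ℝ), IsPMF s ∧
      probEq s Prod.snd = probEq P (coordLo Y j) ∧
      refInfo s (probEq P (coordLo Y j)) ≤ R * Real.log 2 ∧
      r * Real.log 2 = refInfo (channelPush s (hopKernel P j))
        (outputLaw (probEq P (coordLo Y j)) (hopKernel P j)) := by
  have hlo := isPMF_probEq hP (coordLo Y j)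
  obtain ⟨m, PU, hPU, hR, rfl⟩ := hr
  set s : Fin m × Y (j : ℕ) → ℝ := fun z => PU z.2 z.1 * probEq P (coordLo Y j) z.2
  have hsnd : probEq s Prod.snd = probEq P (coordLo Y j) := by
    funext a
    simp only [probEq_snd, s]
    rw [← Finset.sum_mul, (hPU a).2, one_mul]
  have hs : IsPMF s := by
    refine ⟨fun z => mul_nonneg ((hPU _).1 _) (hlo.1 _), ?_⟩
    rw [← sum_probEq s Prod.snd, hsnd, hlo.2]
  rw [mul_pairMargK_eq_channelJoint hP.1 (s := s) fun z => rfl] at hR ⊢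
  refine ⟨m, s, hs, hsnd, ?_, ?_⟩
  · rw [← hsnd, ← miOf_channelJoint_input hs.1 (isPMF_hopKernel hP j)]
    exact mul_le_mul_of_nonneg_right hR (Real.log_nonneg one_le_two)
  · rw [← hsnd, ← miOf_channelJoint_output hs.1 (isPMF_hopKernel hP j)]

theorem mem_etaSetK_of_refInfo_le (hP : IsPMF P) {m : ℕ} {s : Fin m × Y (j : ℕ) → ℝ}
    (hs : IsPMF s) (hsnd : probEq s Prod.snd = probEq P (coordLo Y j))
    (hR : refInfo s (probEq P (coordLo Y j)) ≤ R * Real.log 2)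
    (hr : r * Real.log 2 = refInfo (channelPush s (hopKernel P j))
      (outputLaw (probEq P (coordLo Y j)) (hopKernel P j))) : r ∈ etaSetK K Y P j R := by
  have hlog : 0 < Real.log 2 := Real.log_pos one_lt_two
  set s' : Y (j : ℕ) × Fin m → ℝ := fun z => s (z.2, z.1)
  have hfst : probEq s' Prod.fst = probEq P (coordLo Y j) := by
    rw [← hsnd]
    funext a
    rw [probEq_fst, probEq_snd]
  have hs' : IsPMF s' := by
    refine ⟨fun z => hs.1 _, ?_⟩
    rw [← sum_probEq s' Prod.fst, hfst, (isPMF_probEq hP _).2]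
  refine ⟨m, condKernel s', isPMF_condKernel hs', ?_⟩
  rw [mul_pairMargK_eq_channelJoint hP.1 (s := s) fun z => by
    rw [← hfst, mul_comm, probEq_fst_mul_condKernel hs'.1]]
  rw [← hsnd] at hR hr
  rw [← miOf_channelJoint_input hs.1 (isPMF_hopKernel hP j)] at hR
  rw [← miOf_channelJoint_output hs.1 (isPMF_hopKernel hP j)] at hr
  exact ⟨le_of_mul_le_mul_right hR hlog, mul_right_cancel₀ hlog.ne' hr⟩

theorem bddAbove_etaSetK (hP : IsPMF P) : BddAbove (etaSetK K Y P j R) := by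
  refine ⟨R, fun r hr => ?_⟩
  obtain ⟨m, s, hs, hsnd, hR, hr⟩ := exists_refInfo_of_mem_etaSetK hP hr
  refine le_of_mul_le_mul_right ?_ (Real.log_pos one_lt_two)
  rw [hr]
  refine le_trans (refInfo_channelPush_le hs.1 (isPMF_probEq hP _).1 ?_ (isPMF_hopKernel hP j)) hR
  exact fun v a hva => hsnd ▸ probEq_ne_zero hs.1 Prod.snd hva

theorem isBottleneckBound_etaK (hP : IsPMF P) (j : Fin K) (R : ℝ) :
    IsBottleneckBound (probEq P (coordLo Y j)) (hopKernel P j) (R * Real.log 2)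
      (etaK K Y P j R * Real.log 2) := by
  intro m s hs hsnd hR
  have hlog : 0 < Real.log 2 := Real.log_pos one_lt_two
  rw [← div_le_iff₀ hlog]
  exact le_csSup (bddAbove_etaSetK hP)
    (mem_etaSetK_of_refInfo_le hP hs hsnd hR (div_mul_cancel₀ _ hlog.ne'))

end Eta

end Markov

/-! ### Change of measure -/

section ChangeOfMeasure

variable {Ω α : Type*} [Fintype Ω]

theorem exists_isPMF_probEq_eq_one {q : Ω → ℝ} (hq : IsPMF q) {D : Ω → α} {a : α} {c : ℝ}
    (hc : 0 < c) (h : c ≤ probEq q D a) :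
    ∃ p : Ω → ℝ, IsPMF p ∧ (∀ ω, p ω ≤ Real.exp (-Real.log c) * q ω) ∧ probEq p D a = 1 := by
  classical
  have hpos : 0 < probEq q D a := hc.trans_le h
  refine ⟨fun ω => (if D ω = a then q ω else 0) / probEq q D a, ⟨fun ω => ?_, ?_⟩, fun ω => ?_, ?_⟩
  · exact div_nonneg (by split_ifs <;> simp [hq.1]) hpos.le
  · rw [← Finset.sum_div]
    exact div_self hpos.ne'
  · rw [Real.exp_neg, Real.exp_log hc, inv_mul_eq_div]
    exact div_le_div₀ (hq.1 ω) (by split_ifs <;> simp [hq.1]) hc h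
  · rw [← div_self hpos.ne', probEq, probEq, Finset.sum_div]
    exact Finset.sum_congr rfl fun ω _ => by by_cases hD : D ω = a <;> simp [hD]

theorem relEntropy_eq_log_one_div {p q : Ω → ℝ} (hp : IsPMF p) {ω : Ω} (hω : p ω = 1) :
    relEntropy p q = Real.log (1 / q ω) := by
  classical
  have hzero : ∀ ω', ω' ≠ ω → p ω' = 0 := fun ω' hne => by
    have hrest : ∑ x ∈ Finset.univ.erase ω, p x = 0 := by
      rw [Finset.sum_erase_eq_sub (Finset.mem_univ ω), hp.2, hω, sub_self]
    exact (Finset.sum_eq_zero_iff_of_nonneg fun x _ => hp.1 x).mp hrest ω' (by simp [hne])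
  rw [relEntropy, meanLog, Finset.sum_eq_single ω (fun ω' _ hne => by simp [hzero ω' hne])
    (by simp), hω, one_mul]

theorem relEntropy_probEq_prodMk {V X : Type*} [Fintype V] [Fintype X] {p q : Ω → ℝ}
    (hp : ∀ ω, 0 ≤ p ω) (hq : ∀ ω, 0 ≤ q ω) (hpq : AbsCont p q) {U : Ω → V} {A : Ω → X}
    {Q : X → ℝ} (hind : ∀ u a, probEq q (fun ω => (U ω, A ω)) (u, a) = probEq q U u * Q a) :
    relEntropy (probEq p fun ω => (U ω, A ω)) (probEq q fun ω => (U ω, A ω)) =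
      refInfo (probEq p fun ω => (U ω, A ω)) Q + relEntropy (probEq p U) (probEq q U) := by
  have hpair := absCont_probEq_self hp fun ω => (U ω, A ω)
  have hpU := absCont_probEq_self hp U
  have hqU : AbsCont p (fun ω => probEq q U (U ω)) := fun ω h => probEq_ne_zero hq U (hpq h)
  have hQ : AbsCont p (fun ω => Q (A ω)) := fun ω h =>
    right_ne_zero_of_mul (hind (U ω) (A ω) ▸ probEq_ne_zero hq (fun ω => (U ω, A ω)) (hpq h))
  rw [relEntropy_probEq, refInfo_probEq, relEntropy_probEq]
  simp only [hind]
  rw [meanLog_div hpair fun ω h => mul_ne_zero (hqU h) (hQ h), meanLog_mul hqU hQ,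
    meanLog_div hpair fun ω h => mul_ne_zero (hpU h) (hQ h), meanLog_mul hpU hQ,
    meanLog_div hpU hqU]
  ring

theorem log_card_range_le [Nonempty Ω] {f : Ω → ℕ} {c : ℝ} (h : ∀ ω, (f ω : ℝ) + 1 ≤ c) :
    Real.log (Fintype.card (Set.range f)) ≤ Real.log c := by
  obtain ⟨ω₀⟩ := ‹Nonempty Ω›
  have hlt : ∀ m : Set.range f, (m : ℕ) < ⌊c⌋₊ := by
    rintro ⟨_, ω, rfl⟩
    exact Nat.le_floor (by exact_mod_cast h ω)
  have hcard : Fintype.card (Set.range f) ≤ ⌊c⌋₊ := by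
    simpa using Fintype.card_le_of_injective (fun m : Set.range f => (⟨m, hlt m⟩ : Fin ⌊c⌋₊))
      fun _ _ hmm' => Subtype.ext (Fin.mk.inj hmm')
  have hc : 0 ≤ c := (by positivity : (0 : ℝ) ≤ f ω₀ + 1).trans (h ω₀)
  have hpos : 0 < Fintype.card (Set.range f) := Fintype.card_pos_iff.mpr ⟨⟨_, ω₀, rfl⟩⟩
  exact Real.log_le_log (by exact_mod_cast hpos)
    ((Nat.cast_le.mpr hcard).trans (Nat.floor_le hc))

end ChangeOfMeasure

/-! ### The two hypotheses -/

section Hypotheses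

variable {K n : ℕ} {Y : ℕ → Type} [∀ i, Fintype (Y i)] {P : (∀ i : Fin (K + 1), Y i) → ℝ}

theorem probEq_iidK_transpose (P : (∀ i : Fin (K + 1), Y i) → ℝ) :
    probEq (iidK K Y P n) (fun ys t i => ys i t) = iidLaw P := by
  funext ω
  exact probEq_equiv (iidK K Y P n) (Equiv.piComm fun (i : Fin (K + 1)) (_ : Fin n) => Y i) ω

theorem probEq_iidK_letterwise {α : Type*} (P : (∀ i : Fin (K + 1), Y i) → ℝ)
    (f : (∀ i : Fin (K + 1), Y i) → α) :
    probEq (iidK K Y P n) (fun ys t => f fun i => ys i t) = iidLaw (probEq P f) := by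
  rw [← probEq_iidLaw, ← probEq_iidK_transpose, probEq_probEq]

theorem isPMF_iidK (hP : IsPMF P) : IsPMF (iidK K Y P n) := by
  refine ⟨fun ys => Finset.prod_nonneg fun t _ => hP.1 _, ?_⟩
  rw [← sum_probEq _ (fun ys t i => ys i t), probEq_iidK_transpose]
  exact (isPMF_iidLaw hP).2

theorem isPMF_margK (hP : IsPMF P) (i : Fin (K + 1)) : IsPMF (margK K Y P i) :=
  isPMF_probEq hP fun y => y i

theorem iidQK_eq_piLaw (P : (∀ i : Fin (K + 1), Y i) → ℝ) :
    iidQK K Y P n = piLaw fun i => iidLaw (margK K Y P i) :=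
  funext fun _ => Finset.prod_comm

theorem isPMF_iidQK (hP : IsPMF P) : IsPMF (iidQK K Y P n) := by
  rw [iidQK_eq_piLaw]
  exact isPMF_piLaw fun i => isPMF_iidLaw (isPMF_margK hP i)

theorem probEq_iidQK_apply (hP : IsPMF P) (i : Fin (K + 1)) :
    probEq (iidQK K Y P n) (fun ys => ys i) = probEq (iidK K Y P n) (fun ys => ys i) := by
  rw [iidQK_eq_piLaw, probEq_piLaw_apply fun i => isPMF_iidLaw (isPMF_margK hP i)]
  exact (probEq_iidK_letterwise P fun y => y i).symm

theorem absCont_iidK_iidQK (hP : ∀ y, 0 ≤ P y) : AbsCont (iidK K Y P n) (iidQK K Y P n) :=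
  fun _ h => Finset.prod_ne_zero_iff.mpr fun t ht => Finset.prod_ne_zero_iff.mpr fun i _ =>
    probEq_ne_zero hP (fun y => y i) (Finset.prod_ne_zero_iff.mp h t ht)

theorem probEq_iidQK_prodMk_coordHi (hP : IsPMF P) {σ : Type*}
    {U : (∀ i : Fin (K + 1), Fin n → Y i) → σ} {j : Fin K} (hU : DependsOn U {i | (i : ℕ) ≤ j})
    (u : σ) (a : Fin n → Y ((j : ℕ) + 1)) :
    probEq (iidQK K Y P n) (fun ys => (U ys, coordHi (fun i => Fin n → Y i) j ys)) (u, a) =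
      probEq (iidQK K Y P n) U u * iidLaw (probEq P (coordHi Y j)) a := by
  rw [iidQK_eq_piLaw]
  exact probEq_piLaw_pair (A := fun i : Fin (K + 1) => Fin n → Y i) (i := idxHi K j)
    (isPMF_iidLaw (isPMF_margK hP _)).2
    (fun ys b => update_idxHi_of_dependsOn (Y := fun i => Fin n → Y i) hU ys b) u a

theorem IsMarkovChainK.exists_refInfo_le [∀ i, Nonempty (Y i)] (hP : IsPMF P)
    (hM : IsMarkovChainK K Y P) (j : Fin K) {R ε : ℝ} (hR : 0 ≤ R) (hε : 0 < ε) :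
    ∃ δ > 0, ∀ {n : ℕ}, 0 < n → ∀ {V : Type*} [Fintype V]
      {p : (∀ i : Fin (K + 1), Fin n → Y i) → ℝ} {B : ℝ}, IsPMF p →
      (∀ ys, p ys ≤ Real.exp B * iidK K Y P n ys) → B ≤ n * δ →
      ∀ {U : (∀ i : Fin (K + 1), Fin n → Y i) → V}, DependsOn U {i | (i : ℕ) ≤ j} →
      Real.log (Fintype.card V) ≤ n * (R * Real.log 2) →
      refInfo (probEq p fun ys => (U ys, coordHi (fun i => Fin n → Y i) j ys))
        (iidLaw (probEq P (coordHi Y j))) ≤ n * (etaK K Y P j R * Real.log 2 + ε) := by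
  classical
  set past : (∀ i : Fin (K + 1), Y i) → ∀ i : {i : Fin (K + 1) | (i : ℕ) ≤ j}, Y i :=
    Set.domRestrict {i : Fin (K + 1) | (i : ℕ) ≤ j}
  set s := probEq P fun y => (past y, coordLo Y j y)
  have hsnd : probEq s Prod.snd = probEq P (coordLo Y j) := probEq_probEq _ _ _
  have hjoint : probEq P (fun y => (past y, coordLo Y j y, coordHi Y j y)) =
      channelJoint s (hopKernel P j) := hM.probEq_hop hP j (Set.dependsOn_domRestrict _)
  have hbottleneck := hsnd.symm ▸ isBottleneckBound_etaK hP j R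
  obtain ⟨δ, hδ, hhop⟩ := hbottleneck.exists_refInfo_le (isPMF_probEq hP _) (isPMF_hopKernel hP j)
    (mul_nonneg hR (Real.log_nonneg one_le_two)) hε
  refine ⟨δ, hδ, fun {n} hn {V} _ {p} {B} hp hpB hB {U} hU hV => ?_⟩
  have : Nonempty V := ⟨U fun _ _ => Classical.arbitrary _⟩
  obtain ⟨m, rfl⟩ := dependsOn_iff_exists_comp.mp hU
  set hopLetters := fun (ys : ∀ i : Fin (K + 1), Fin n → Y i) (t : Fin n) =>
    (fun y => (past y, coordLo Y j y, coordHi Y j y)) fun i => ys i t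
  have hpB' : ∀ ω, probEq p hopLetters ω ≤
      Real.exp B * iidLaw (channelJoint s (hopKernel P j)) ω := by
    rw [← hjoint, ← probEq_iidK_letterwise]
    exact probEq_le_mul hpB hopLetters
  have hbound := hhop hn (isPMF_probEq hp hopLetters) hpB' hB (fun c => m fun i t => c t i) hV
  rw [probEq_probEq, hsnd, outputLaw_hopKernel hP.1] at hbound
  exact hbound

end Hypotheses

/-! ### Messages and decisions -/

section Messages

variable {K n : ℕ} {Y : ℕ → Type} [∀ i, Nonempty (Y i)]
  {φ : ∀ ℓ : ℕ, (Fin n → Y ℓ) → ℕ → ℕ}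

theorem dependsOn_extendTup (ℓ : ℕ) :
    DependsOn (fun ys => extendTup K Y n ys ℓ) {i | (i : ℕ) ≤ ℓ} := by
  intro ys ys' h
  simp only [extendTup]
  split_ifs with hℓ
  · exact h ⟨ℓ, hℓ⟩ (le_refl ℓ)
  · rfl

theorem extendTup_succ (j : Fin K) (ys : ∀ i : Fin (K + 1), Fin n → Y i) :
    extendTup K Y n ys (j + 1) = coordHi (fun i => Fin n → Y i) j ys :=
  dif_pos (Nat.succ_lt_succ j.isLt)

theorem dependsOn_msgRec (φ : ∀ ℓ : ℕ, (Fin n → Y ℓ) → ℕ → ℕ) (ℓ : ℕ) :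
    DependsOn (fun ys => msgRec Y n φ (extendTup K Y n ys) ℓ) {i | (i : ℕ) ≤ ℓ} := by
  intro ys ys' h
  induction ℓ with
  | zero => exact congrArg (φ 0 · 0) (dependsOn_extendTup 0 h)
  | succ ℓ ih =>
    exact congrArg₂ (φ (ℓ + 1)) (dependsOn_extendTup (ℓ + 1) h)
      (ih fun i hi => h i (Nat.le_succ_of_le hi))

/-- The message `M_{ℓ+1}`, with values in the finite alphabet of the numbers that it can attain. -/
def message (φ : ∀ ℓ : ℕ, (Fin n → Y ℓ) → ℕ → ℕ) (ℓ : ℕ) :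
    (∀ i : Fin (K + 1), Fin n → Y i) →
      Set.range fun ys : ∀ i : Fin (K + 1), Fin n → Y i => msgRec Y n φ (extendTup K Y n ys) ℓ :=
  Set.rangeFactorization _

/-- The decision `Ĥ_{j+1}`; `true` stands for the guess `Ĥ = 1`. -/
def decision (φ : ∀ ℓ : ℕ, (Fin n → Y ℓ) → ℕ → ℕ) (g : ∀ m : ℕ, (Fin n → Y m) → ℕ → Bool)
    (j : Fin K) (ys : ∀ i : Fin (K + 1), Fin n → Y i) : Bool :=
  g (j + 1) (extendTup K Y n ys (j + 1)) (msgRec Y n φ (extendTup K Y n ys) j)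

theorem dependsOn_message (φ : ∀ ℓ : ℕ, (Fin n → Y ℓ) → ℕ → ℕ) (ℓ : ℕ) :
    DependsOn (message (K := K) φ ℓ) {i | (i : ℕ) ≤ ℓ} :=
  fun _ _ h => Subtype.ext (dependsOn_msgRec φ ℓ h)

theorem message_zero_factorsThrough (φ : ∀ ℓ : ℕ, (Fin n → Y ℓ) → ℕ → ℕ) :
    Function.FactorsThrough (message (K := K) φ 0) (fun ys => ys 0) :=
  fun _ _ h => dependsOn_message φ 0 fun i hi => by
    obtain rfl : i = 0 := Fin.ext (Nat.le_zero.mp hi)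
    exact h

theorem message_succ_factorsThrough (φ : ∀ ℓ : ℕ, (Fin n → Y ℓ) → ℕ → ℕ) (j : Fin K) :
    Function.FactorsThrough (message (K := K) φ (j + 1))
      (fun ys => (message (K := K) φ j ys, coordHi (fun i => Fin n → Y i) j ys)) := by
  intro ys ys' h
  obtain ⟨hmsg, hhi⟩ := Prod.mk.inj h
  rw [← extendTup_succ, ← extendTup_succ] at hhi
  exact Subtype.ext (congrArg₂ (φ (j + 1)) hhi (congrArg Subtype.val hmsg))

theorem decision_factorsThrough (φ : ∀ ℓ : ℕ, (Fin n → Y ℓ) → ℕ → ℕ)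
    (g : ∀ m : ℕ, (Fin n → Y m) → ℕ → Bool) (j : Fin K) :
    Function.FactorsThrough (decision φ g j)
      (fun ys => (message (K := K) φ j ys, coordHi (fun i => Fin n → Y i) j ys)) := by
  intro ys ys' h
  obtain ⟨hmsg, hhi⟩ := Prod.mk.inj h
  rw [← extendTup_succ, ← extendTup_succ] at hhi
  exact congrArg₂ (g (j + 1)) hhi (congrArg Subtype.val hmsg)

variable [∀ i, Fintype (Y i)]

theorem log_card_message_le {R : ℝ} {ℓ : ℕ}
    (h : ∀ ys : ∀ i : Fin (K + 1), Fin n → Y i,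
      (msgRec Y n φ (extendTup K Y n ys) ℓ : ℝ) + 1 ≤ 2 ^ ((n : ℝ) * R)) :
    Real.log (Fintype.card (Set.range fun ys : ∀ i : Fin (K + 1), Fin n → Y i =>
      msgRec Y n φ (extendTup K Y n ys) ℓ)) ≤ n * (R * Real.log 2) := by
  refine (log_card_range_le h).trans_eq ?_
  rw [Real.log_rpow two_pos, mul_assoc]

variable {P : (∀ i : Fin (K + 1), Y i) → ℝ} {g : ∀ m : ℕ, (Fin n → Y m) → ℕ → Bool} {j : Fin K}

theorem alphaK_eq_probEq : alphaK K Y P n φ g j = probEq (iidK K Y P n) (decision φ g j) true :=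
  Finset.sum_congr rfl fun _ _ => by congr

theorem betaK_eq_probEq : betaK K Y P n φ g j = probEq (iidQK K Y P n) (decision φ g j) false :=
  Finset.sum_congr rfl fun _ _ => by congr

theorem alphaK_le_one (hP : IsPMF P) : alphaK K Y P n φ g j ≤ 1 := by
  rw [alphaK_eq_probEq]
  exact probEq_le_one (isPMF_iidK hP) _ _

theorem alphaK_add_probEq_false (hP : IsPMF P) :
    alphaK K Y P n φ g j + probEq (iidK K Y P n) (decision φ g j) false = 1 := by
  rw [alphaK_eq_probEq, ← (isPMF_iidK hP).2, ← sum_probEq _ (decision φ g j), Fintype.sum_bool]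

theorem logb_one_div_betaK_div_nonneg (hP : IsPMF P) :
    0 ≤ Real.logb 2 (1 / betaK K Y P n φ g j) / n := by
  rw [betaK_eq_probEq, one_div, Real.logb_inv]
  have hlog := Real.logb_nonpos one_lt_two (probEq_nonneg (isPMF_iidQK hP).1 (decision φ g j) false)
    (probEq_le_one (isPMF_iidQK hP) _ _)
  exact div_nonneg (neg_nonneg.mpr hlog) n.cast_nonneg

end Messages

/-! ### Telescoping over the hops -/

section Telescoping

variable {K n : ℕ} {Y : ℕ → Type} [∀ i, Fintype (Y i)] [∀ i, Nonempty (Y i)]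
  {P : (∀ i : Fin (K + 1), Y i) → ℝ} {φ : ∀ ℓ : ℕ, (Fin n → Y ℓ) → ℕ → ℕ}
  {p : (∀ i : Fin (K + 1), Fin n → Y i) → ℝ}

/-- The information, under the law `p`, between the message sent over hop `j` and the sequence
observed by its receiver, relative to the i.i.d. law that this sequence has under both
hypotheses. -/
def hopInfo (P : (∀ i : Fin (K + 1), Y i) → ℝ) (p : (∀ i : Fin (K + 1), Fin n → Y i) → ℝ)
    (φ : ∀ ℓ : ℕ, (Fin n → Y ℓ) → ℕ → ℕ) (j : Fin K) : ℝ :=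
  refInfo (probEq p fun ys => (message φ j ys, coordHi (fun i => Fin n → Y i) j ys))
    (iidLaw (probEq P (coordHi Y j)))

theorem relEntropy_le_hopInfo_add (hP : IsPMF P) (hp : ∀ ys, 0 ≤ p ys)
    (hpq : AbsCont p (iidQK K Y P n)) {j : Fin K} {δ : Type*} [Fintype δ]
    {D : (∀ i : Fin (K + 1), Fin n → Y i) → δ}
    (hD : Function.FactorsThrough D
      fun ys => (message φ j ys, coordHi (fun i => Fin n → Y i) j ys)) :
    relEntropy (probEq p D) (probEq (iidQK K Y P n) D) ≤ hopInfo P p φ j +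
      relEntropy (probEq p (message φ j)) (probEq (iidQK K Y P n) (message φ j)) := by
  have hq := (isPMF_iidQK (n := n) hP).1
  exact (relEntropy_probEq_le_of_factorsThrough hp hq hpq hD).trans_eq
    (relEntropy_probEq_prodMk hp hq hpq
      (probEq_iidQK_prodMk_coordHi hP (dependsOn_message φ j)))

theorem relEntropy_message_zero_le (hP : IsPMF P) (hp : IsPMF p) {B : ℝ}
    (hpB : ∀ ys, p ys ≤ Real.exp B * iidK K Y P n ys) (hpq : AbsCont p (iidQK K Y P n)) :
    relEntropy (probEq p (message φ 0)) (probEq (iidQK K Y P n) (message φ 0)) ≤ B := by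
  refine (relEntropy_probEq_le_of_factorsThrough hp.1 (isPMF_iidQK hP).1 hpq
    (message_zero_factorsThrough φ)).trans ?_
  rw [probEq_iidQK_apply hP]
  exact relEntropy_le_of_le_exp_mul (isPMF_probEq hp _) (probEq_le_mul hpB _)

theorem relEntropy_message_le (hP : IsPMF P) (hp : IsPMF p) {B : ℝ}
    (hpB : ∀ ys, p ys ≤ Real.exp B * iidK K Y P n ys) (hpq : AbsCont p (iidQK K Y P n))
    {k : ℕ} (hk : k < K) :
    relEntropy (probEq p (message φ k)) (probEq (iidQK K Y P n) (message φ k)) ≤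
      B + ∑ l ∈ Finset.Iio ⟨k, hk⟩, hopInfo P p φ l := by
  induction k with
  | zero =>
    have hempty : Finset.Iio (⟨0, hk⟩ : Fin K) = ∅ := by ext; simp [Fin.lt_def]
    rw [hempty, Finset.sum_empty, add_zero]
    exact relEntropy_message_zero_le hP hp hpB hpq
  | succ k ih =>
    have hk' : k < K := Nat.lt_of_succ_lt hk
    have hIio : Finset.Iio (⟨k + 1, hk⟩ : Fin K) = Finset.Iic ⟨k, hk'⟩ := by
      ext; simp [Fin.lt_def, Fin.le_def]
    have hstep := relEntropy_le_hopInfo_add hP hp.1 hpq (message_succ_factorsThrough φ ⟨k, hk'⟩)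
    rw [hIio, ← Finset.Iio_insert, Finset.sum_insert (by simp)]
    linarith [ih hk']

theorem log_one_div_betaK_le (hP : IsPMF P) (hp : IsPMF p) {B : ℝ}
    (hpB : ∀ ys, p ys ≤ Real.exp B * iidK K Y P n ys)
    {g : ∀ m : ℕ, (Fin n → Y m) → ℕ → Bool} {j : Fin K}
    (haccept : probEq p (decision φ g j) false = 1) :
    Real.log (1 / betaK K Y P n φ g j) ≤ B + ∑ l ∈ Finset.Iic j, hopInfo P p φ l := by
  have hpq : AbsCont p (iidQK K Y P n) := fun _ h =>
    absCont_iidK_iidQK hP.1 (AbsCont.of_le_mul hp.1 hpB h)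
  rw [betaK_eq_probEq, ← relEntropy_eq_log_one_div (isPMF_probEq hp _) haccept,
    ← Finset.Iio_insert, Finset.sum_insert (by simp)]
  have hstep := relEntropy_le_hopInfo_add hP hp.1 hpq (decision_factorsThrough φ g j)
  linarith [relEntropy_message_le (φ := φ) hP hp hpB hpq j.isLt]

end Telescoping

/-! ### Error exponents -/

section Exponents

variable {K : ℕ} {Y : ℕ → Type} [∀ i, Fintype (Y i)] [∀ i, Nonempty (Y i)]
  {P : (∀ i : Fin (K + 1), Y i) → ℝ}

theorem IsMarkovChainK.eventually_log_one_div_betaK_le (hP : IsPMF P) (hM : IsMarkovChainK K Y P)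
    {R : Fin K → ℝ} (hR : ∀ l, 0 ≤ R l) {a e : ℝ} (ha : a < 1) (he : 0 < e) (j : Fin K) :
    ∀ᶠ n : ℕ in atTop, ∀ (φ : ∀ ℓ : ℕ, (Fin n → Y ℓ) → ℕ → ℕ)
      (g : ∀ m : ℕ, (Fin n → Y m) → ℕ → Bool),
      (∀ (l : Fin K) (ys : ∀ i : Fin (K + 1), Fin n → Y i),
        (msgRec Y n φ (extendTup K Y n ys) l : ℝ) + 1 ≤ 2 ^ ((n : ℝ) * R l)) →
      alphaK K Y P n φ g j ≤ a →
      Real.log (1 / betaK K Y P n φ g j) ≤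
        n * (e + ∑ l ∈ Finset.Iic j, (etaK K Y P l (R l) * Real.log 2 + e)) := by
  choose δ hδ hhop using fun l => hM.exists_refInfo_le hP l (hR l) he
  have hlarge : ∀ {x : ℝ}, 0 < x → ∀ᶠ n : ℕ in atTop, -Real.log (1 - a) ≤ n * x := fun hx =>
    (tendsto_natCast_atTop_atTop.atTop_mul_const hx).eventually_ge_atTop _
  filter_upwards [eventually_gt_atTop 0, eventually_all.mpr fun l => hlarge (hδ l), hlarge he]
    with n hn hnδ hne φ g hlen hα
  have hmass : 1 - a ≤ probEq (iidK K Y P n) (decision φ g j) false := by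
    linarith [alphaK_add_probEq_false (n := n) (φ := φ) (g := g) (j := j) hP]
  obtain ⟨p, hp, hpB, haccept⟩ := exists_isPMF_probEq_eq_one (isPMF_iidK hP) (sub_pos.mpr ha) hmass
  have hinfo : ∀ l, hopInfo P p φ l ≤ n * (etaK K Y P l (R l) * Real.log 2 + e) := fun l =>
    hhop l hn hp hpB (hnδ l) (dependsOn_message φ l) (log_card_message_le (hlen l))
  calc Real.log (1 / betaK K Y P n φ g j)
      ≤ -Real.log (1 - a) + ∑ l ∈ Finset.Iic j, hopInfo P p φ l :=
        log_one_div_betaK_le hP hp hpB haccept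
    _ ≤ n * e + ∑ l ∈ Finset.Iic j, n * (etaK K Y P l (R l) * Real.log 2 + e) :=
        add_le_add hne (Finset.sum_le_sum fun l _ => hinfo l)
    _ = n * (e + ∑ l ∈ Finset.Iic j, (etaK K Y P l (R l) * Real.log 2 + e)) := by
        rw [← Finset.mul_sum, mul_add]

theorem IsMarkovChainK.eventually_exponent_le (hP : IsPMF P) (hM : IsMarkovChainK K Y P)
    {R : Fin K → ℝ} (hR : ∀ l, 0 ≤ R l) {a ρ : ℝ} (ha : a < 1) (hρ : 0 < ρ) (j : Fin K) :
    ∀ᶠ n : ℕ in atTop, ∀ (φ : ∀ ℓ : ℕ, (Fin n → Y ℓ) → ℕ → ℕ)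
      (g : ∀ m : ℕ, (Fin n → Y m) → ℕ → Bool),
      (∀ (l : Fin K) (ys : ∀ i : Fin (K + 1), Fin n → Y i),
        (msgRec Y n φ (extendTup K Y n ys) l : ℝ) + 1 ≤ 2 ^ ((n : ℝ) * R l)) →
      alphaK K Y P n φ g j ≤ a →
      Real.logb 2 (1 / betaK K Y P n φ g j) / n ≤
        ∑ l ∈ Finset.Iic j, etaK K Y P l (R l) + ρ := by
  have hlog : 0 < Real.log 2 := Real.log_pos one_lt_two
  set e : ℝ := ρ * Real.log 2 / ((Finset.Iic j).card + 1)
  have he : 0 < e := by positivity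
  have hesum : e + (Finset.Iic j).card * e = ρ * Real.log 2 := by
    simp only [e]
    field_simp
    ring
  filter_upwards [eventually_gt_atTop 0, hM.eventually_log_one_div_betaK_le hP hR ha he j]
    with n hn hbound φ g hlen hα
  have hn' : (0 : ℝ) < n := Nat.cast_pos.mpr hn
  rw [Real.logb, div_div, div_le_iff₀ (mul_pos hlog hn')]
  refine (hbound φ g hlen hα).trans_eq ?_
  rw [Finset.sum_add_distrib, ← Finset.sum_mul, Finset.sum_const, nsmul_eq_mul]
  linear_combination (n : ℝ) * hesum

end Exponents

/-- strong converse for the `K`-hop testing-against-independence problem.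
For every `K ≥ 2`, rates `R₁,…,R_K ≥ 0`, and type-I thresholds `ε₁,…,ε_K ∈ [0,1)`,
every `(ε₁,…,ε_K)`-achievable exponent tuple `(θ₁,…,θ_K)` satisfies
`θ_k ≤ ∑_{ℓ=1}^{k} η_ℓ(R_ℓ)` for every `k ∈ {1,…,K}`. -/
theorem khop_strong_converse
    (K : ℕ) (hK : 2 ≤ K) (Y : ℕ → Type) [∀ i, Fintype (Y i)] [∀ i, Nonempty (Y i)]
    (P : (∀ i : Fin (K + 1), Y i) → ℝ) (hP : IsPMF P) (hMC : IsMarkovChainK K Y P)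
    (Rr : Fin K → ℝ) (hR : ∀ j, 0 ≤ Rr j)
    (εr : Fin K → ℝ) (hε : ∀ j, 0 ≤ εr j ∧ εr j < 1)
    (θ : Fin K → ℝ) (hach : achievableK K Y P Rr εr θ) :
    ∀ j : Fin K, θ j ≤ ∑ l ∈ Finset.Iic j, etaK K Y P l (Rr l) := by
  intro j
  obtain ⟨φ, g, hlen, hα, hθ⟩ := hach
  obtain ⟨a, hεa, ha⟩ := exists_between (hε j).2
  have hαa : ∀ᶠ n in atTop, alphaK K Y P n (φ n) (g n) j < a :=
    eventually_lt_of_limsup_lt ((hα j).trans_lt hεa)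
      (isBoundedUnder_of ⟨1, fun n => alphaK_le_one hP⟩)
  refine le_of_forall_pos_le_add fun ρ hρ => (hθ j).trans ?_
  refine liminf_le_of_frequently_le (Eventually.frequently ?_)
    (isBoundedUnder_of ⟨0, fun n => logb_one_div_betaK_div_nonneg hP⟩)
  filter_upwards [hαa, hMC.eventually_exponent_le hP hR ha hρ j] with n hαn hexponent
  exact hexponent (φ n) (g n) (hlen n) hαn.le
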